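/- arXiv:2408.03530 — 12 statements merged into one kernel-verified Lean document; each statement's English description precedes it below -/
import Mathlib

section
/- Assume RA and ER. Then for every Borel set A ⊆ ℝ: P(Y∈A, D=1 | Z=0) − P(Y∈A, D=1 | Z=1) = P(Y₁∈A, T=df) − P(Y₁∈A, T=c), and P(Y∈A, D=0 | Z=1) − P(Y∈A, D=0 | Z=0) = P(Y₀∈A, T=df) − P(Y₀∈A, T=c). In particular (taking A = ℝ): P(D=1 | Z=0) − P(D=1 | Z=1) = p_df − p_c. -/
open MeasureTheory ProbabilityTheory

/-- Conditional probability `P(s | t)` as a real number. -/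
noncomputable def pr {Ω : Type*} [MeasurableSpace Ω] (P : Measure Ω) (t s : Set Ω) : ℝ :=
  ((P[|t]) s).toReal

/-- Conditional expectation `E[f | t]` as a real number. -/
noncomputable def ce {Ω : Type*} [MeasurableSpace Ω] (P : Measure Ω) (t : Set Ω) (f : Ω → ℝ) : ℝ :=
  ∫ ω, f ω ∂(P[|t])

/-- Always-takers. -/
def typeA {Ω : Type*} (D0 D1 : Ω → ℝ) : Set Ω := {ω | D0 ω = 1 ∧ D1 ω = 1}
/-- Never-takers. -/
def typeN {Ω : Type*} (D0 D1 : Ω → ℝ) : Set Ω := {ω | D0 ω = 0 ∧ D1 ω = 0}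
/-- Compliers. -/
def typeC {Ω : Type*} (D0 D1 : Ω → ℝ) : Set Ω := {ω | D0 ω = 0 ∧ D1 ω = 1}
/-- Defiers. -/
def typeDF {Ω : Type*} (D0 D1 : Ω → ℝ) : Set Ω := {ω | D0 ω = 1 ∧ D1 ω = 0}

theorem pr_aux {Ω E : Type*} [MeasurableSpace Ω] [MeasurableSpace E] (P : Measure Ω)
    [IsProbabilityMeasure P] (X : Ω → E) (Z : Ω → ℝ) (hZm : Measurable Z)
    (RA : IndepFun X Z P) (z : ℝ) (hz : P {ω | Z ω = z} ≠ 0)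
    (s : Set Ω) (S : Set E) (hS : MeasurableSet S) (T : Set Ω)
    (h : ∀ ω, Z ω = z → (ω ∈ s ↔ X ω ∈ S)) (hT : ∀ᵐ ω ∂P, X ω ∈ S ↔ ω ∈ T) :
    pr P {ω | Z ω = z} s = (P T).toReal := by
  have hm : MeasurableSet {ω | Z ω = z} := hZm (measurableSet_singleton z)
  have h1 : {ω | Z ω = z} ∩ s = X ⁻¹' S ∩ Z ⁻¹' {z} := by
    ext ω
    simp only [Set.mem_inter_iff, Set.mem_ofPred_eq, Set.mem_preimage, Set.mem_singleton_iff]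
    constructor
    · rintro ⟨a, b⟩
      exact ⟨(h ω a).1 b, a⟩
    · rintro ⟨a, b⟩
      exact ⟨b, (h ω b).2 a⟩
  have h2 := RA.measure_inter_preimage_eq_mul S {z} hS (measurableSet_singleton z)
  have h3 : P (X ⁻¹' S) = P T := measure_congr (by
    filter_upwards [hT] with ω hω
    exact propext hω)
  have h4 : Z ⁻¹' {z} = {ω | Z ω = z} := rfl
  unfold pr
  rw [cond_apply hm, h1, h2, h3, h4, mul_comm (P T), ← mul_assoc,
    ENNReal.inv_mul_cancel hz (measure_ne_top _ _), one_mul]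

theorem split_aux {Ω : Type*} [MeasurableSpace Ω] (P : Measure Ω) [IsProbabilityMeasure P]
    (F G H K : Set Ω) (hK : MeasurableSet K) (h1 : F ∩ K = G) (h2 : F \ K = H) :
    (P F).toReal = (P G).toReal + (P H).toReal := by
  rw [← measure_inter_add_sdiff F hK, h1, h2,
    ENNReal.toReal_add (measure_ne_top _ _) (measure_ne_top _ _)]

theorem difference_decompositions
    {Ω : Type*} [MeasurableSpace Ω] (P : Measure Ω) [IsProbabilityMeasure P]
    (Y11 Y10 Y01 Y00 D0 D1 Z D Y : Ω → ℝ)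
    (hY11m : Measurable Y11) (hY10m : Measurable Y10)
    (hY01m : Measurable Y01) (hY00m : Measurable Y00)
    (hD0m : Measurable D0) (hD1m : Measurable D1) (hZm : Measurable Z)
    (hD0b : ∀ ω, D0 ω = 0 ∨ D0 ω = 1) (hD1b : ∀ ω, D1 ω = 0 ∨ D1 ω = 1)
    (hZb : ∀ ω, Z ω = 0 ∨ Z ω = 1)
    (hZpos : 0 < P {ω | Z ω = 1}) (hZlt : P {ω | Z ω = 1} < 1)
    (hDdef : ∀ ω, D ω = D1 ω * Z ω + D0 ω * (1 - Z ω))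
    (hYdef : ∀ ω, Y ω = (Y11 ω * Z ω + Y10 ω * (1 - Z ω)) * D ω
        + (Y01 ω * Z ω + Y00 ω * (1 - Z ω)) * (1 - D ω))
    (RA : IndepFun (fun ω => (Y11 ω, Y10 ω, Y01 ω, Y00 ω, D0 ω, D1 ω)) Z P)
    (ER1 : ∀ᵐ ω ∂P, Y11 ω = Y10 ω) (ER0 : ∀ᵐ ω ∂P, Y01 ω = Y00 ω)
    (A : Set ℝ) (hA : MeasurableSet A) :
    pr P {ω | Z ω = 0} {ω | Y ω ∈ A ∧ D ω = 1}
        - pr P {ω | Z ω = 1} {ω | Y ω ∈ A ∧ D ω = 1}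
      = (P ({ω | Y11 ω ∈ A} ∩ typeDF D0 D1)).toReal
        - (P ({ω | Y11 ω ∈ A} ∩ typeC D0 D1)).toReal
  ∧ pr P {ω | Z ω = 1} {ω | Y ω ∈ A ∧ D ω = 0}
        - pr P {ω | Z ω = 0} {ω | Y ω ∈ A ∧ D ω = 0}
      = (P ({ω | Y00 ω ∈ A} ∩ typeDF D0 D1)).toReal
        - (P ({ω | Y00 ω ∈ A} ∩ typeC D0 D1)).toReal
  ∧ pr P {ω | Z ω = 0} {ω | D ω = 1} - pr P {ω | Z ω = 1} {ω | D ω = 1}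
      = (P (typeDF D0 D1)).toReal - (P (typeC D0 D1)).toReal := by
  have hz1 : P {ω | Z ω = 1} ≠ 0 := hZpos.ne'
  have hz0 : P {ω | Z ω = 0} ≠ 0 := by
    intro h0
    have hc : {ω | Z ω = 0} = {ω | Z ω = 1}ᶜ := by
      ext ω
      rcases hZb ω with h | h <;> simp [h]
    rw [hc, prob_compl_eq_zero_iff (show MeasurableSet {ω | Z ω = 1} from hZm (measurableSet_singleton 1))] at h0
    exact hZlt.ne h0
  have m0 : MeasurableSet {ω | D0 ω = 1} := hD0m (measurableSet_singleton 1)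
  have m1 : MeasurableSet {ω | D1 ω = 1} := hD1m (measurableSet_singleton 1)
  have first : ∀ A : Set ℝ, MeasurableSet A → pr P {ω | Z ω = 0} {ω | Y ω ∈ A ∧ D ω = 1}
        - pr P {ω | Z ω = 1} {ω | Y ω ∈ A ∧ D ω = 1}
      = (P ({ω | Y11 ω ∈ A} ∩ typeDF D0 D1)).toReal
        - (P ({ω | Y11 ω ∈ A} ∩ typeC D0 D1)).toReal := by
    intro A hA
    rw [pr_aux P _ Z hZm RA 0 hz0 {ω | Y ω ∈ A ∧ D ω = 1} {x | x.2.1 ∈ A ∧ x.2.2.2.2.1 = 1}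
        (by measurability) {ω | Y11 ω ∈ A ∧ D0 ω = 1}
        (by
          intro ω hω
          have hd := hDdef ω
          have hy := hYdef ω
          rcases hD0b ω with h | h <;> simp [hω, h] at hd <;> simp [hω, hd] at hy <;>
            simp [hd, hy, h])
        (by
          filter_upwards [ER1] with ω h
          simp [h]),
      pr_aux P _ Z hZm RA 1 hz1 {ω | Y ω ∈ A ∧ D ω = 1} {x | x.1 ∈ A ∧ x.2.2.2.2.2 = 1}
        (by measurability) {ω | Y11 ω ∈ A ∧ D1 ω = 1}
        (by
          intro ω hω
          have hd := hDdef ω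
          have hy := hYdef ω
          rcases hD1b ω with h | h <;> simp [hω, h] at hd <;> simp [hω, hd] at hy <;>
            simp [hd, hy, h])
        (by simp),
      split_aux P {ω | Y11 ω ∈ A ∧ D0 ω = 1} ({ω | Y11 ω ∈ A} ∩ typeA D0 D1)
        ({ω | Y11 ω ∈ A} ∩ typeDF D0 D1) _ m1
        (by ext ω; simp [typeA, and_assoc])
        (by ext ω; rcases hD1b ω with h | h <;> simp [typeDF, h]),
      split_aux P {ω | Y11 ω ∈ A ∧ D1 ω = 1} ({ω | Y11 ω ∈ A} ∩ typeA D0 D1)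
        ({ω | Y11 ω ∈ A} ∩ typeC D0 D1) _ m0
        (by ext ω; simp [typeA]; tauto)
        (by ext ω; rcases hD0b ω with h | h <;> simp [typeC, h])]
    ring
  refine ⟨first A hA, ?_, by simpa using first Set.univ MeasurableSet.univ⟩
  rw [pr_aux P _ Z hZm RA 1 hz1 {ω | Y ω ∈ A ∧ D ω = 0} {x | x.2.2.1 ∈ A ∧ x.2.2.2.2.2 = 0}
        (by measurability) {ω | Y00 ω ∈ A ∧ D1 ω = 0}
        (by
          intro ω hω
          have hd := hDdef ω
          have hy := hYdef ω
          rcases hD1b ω with h | h <;> simp [hω, h] at hd <;> simp [hω, hd] at hy <;>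
            simp [hd, hy, h])
        (by
          filter_upwards [ER0] with ω h
          simp [h]),
      pr_aux P _ Z hZm RA 0 hz0 {ω | Y ω ∈ A ∧ D ω = 0} {x | x.2.2.2.1 ∈ A ∧ x.2.2.2.2.1 = 0}
        (by measurability) {ω | Y00 ω ∈ A ∧ D0 ω = 0}
        (by
          intro ω hω
          have hd := hDdef ω
          have hy := hYdef ω
          rcases hD0b ω with h | h <;> simp [hω, h] at hd <;> simp [hω, hd] at hy <;>
            simp [hd, hy, h])
        (by simp),
      split_aux P {ω | Y00 ω ∈ A ∧ D1 ω = 0} ({ω | Y00 ω ∈ A} ∩ typeDF D0 D1)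
        ({ω | Y00 ω ∈ A} ∩ typeN D0 D1) _ m0
        (by ext ω; simp [typeDF]; tauto)
        (by ext ω; rcases hD0b ω with h | h <;> simp [typeN, h]),
      split_aux P {ω | Y00 ω ∈ A ∧ D0 ω = 0} ({ω | Y00 ω ∈ A} ∩ typeC D0 D1)
        ({ω | Y00 ω ∈ A} ∩ typeN D0 D1) _ m1
        (by ext ω; simp [typeC, and_assoc])
        (by ext ω; rcases hD1b ω with h | h <;> simp [typeN, h])]
  ring
end

section
/- Assume RA and MON (D₁ ≥ D₀ almost surely). Then the four type probabilities are point identified: p_df = 0, p_c = P(D=1 | Z=1) − P(D=1 | Z=0), p_a = P(D=1 | Z=0), and p_n = P(D=0 | Z=1). -/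
open MeasureTheory ProbabilityTheory

theorem pr_eq_aux {Ω : Type*} [MeasurableSpace Ω] (P : Measure Ω) [IsProbabilityMeasure P]
    (X : Ω → ℝ × ℝ) (Z : Ω → ℝ) (hZm : Measurable Z) (RA : IndepFun X Z P) (z : ℝ)
    (hz : P {ω | Z ω = z} ≠ 0) (S : Set (ℝ × ℝ)) (hS : MeasurableSet S) (s : Set Ω)
    (hs : ∀ ω, Z ω = z → (ω ∈ s ↔ X ω ∈ S)) :
    pr P {ω | Z ω = z} s = (P (X ⁻¹' S)).toReal := by
  have hm : MeasurableSet {ω | Z ω = z} := hZm (measurableSet_singleton z)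
  have h1 : {ω | Z ω = z} ∩ s = X ⁻¹' S ∩ Z ⁻¹' {z} := by
    ext ω
    simp only [Set.mem_inter_iff, Set.mem_ofPred_eq, Set.mem_preimage, Set.mem_singleton_iff]
    have := hs ω
    tauto
  have h2 := RA.measure_inter_preimage_eq_mul S {z} hS (measurableSet_singleton z)
  have h3 : Z ⁻¹' {z} = {ω | Z ω = z} := rfl
  unfold pr
  rw [cond_apply hm, h1, h2, h3, mul_comm (P (X ⁻¹' S)), ← mul_assoc,
    ENNReal.inv_mul_cancel hz (measure_ne_top _ _), one_mul]

theorem type_probabilities_identified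
    {Ω : Type*} [MeasurableSpace Ω] (P : Measure Ω) [IsProbabilityMeasure P]
    (D0 D1 Z D : Ω → ℝ)
    (hD0m : Measurable D0) (hD1m : Measurable D1) (hZm : Measurable Z)
    (hD0b : ∀ ω, D0 ω = 0 ∨ D0 ω = 1) (hD1b : ∀ ω, D1 ω = 0 ∨ D1 ω = 1)
    (hZb : ∀ ω, Z ω = 0 ∨ Z ω = 1)
    (hZpos : 0 < P {ω | Z ω = 1}) (hZlt : P {ω | Z ω = 1} < 1)
    (hDdef : ∀ ω, D ω = D1 ω * Z ω + D0 ω * (1 - Z ω))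
    (RA : IndepFun (fun ω => (D0 ω, D1 ω)) Z P)
    (MON : ∀ᵐ ω ∂P, D0 ω ≤ D1 ω) :
    (P (typeDF D0 D1)).toReal = 0
  ∧ (P (typeC D0 D1)).toReal
      = pr P {ω | Z ω = 1} {ω | D ω = 1} - pr P {ω | Z ω = 0} {ω | D ω = 1}
  ∧ (P (typeA D0 D1)).toReal = pr P {ω | Z ω = 0} {ω | D ω = 1}
  ∧ (P (typeN D0 D1)).toReal = pr P {ω | Z ω = 1} {ω | D ω = 0} := by
  have hz1 : P {ω | Z ω = 1} ≠ 0 := hZpos.ne'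
  have hz0 : P {ω | Z ω = 0} ≠ 0 := by
    intro h
    have hc : {ω | Z ω = 1} = {ω | Z ω = 0}ᶜ := by
      ext ω
      rcases hZb ω with h | h <;> simp [h]
    have hm0 : MeasurableSet {ω | Z ω = 0} := hZm (measurableSet_singleton 0)
    rw [hc, prob_compl_eq_one_sub hm0, h] at hZlt
    simp at hZlt
  have m0 : ∀ a : ℝ, MeasurableSet {p : ℝ × ℝ | p.1 = a} := fun a =>
    measurable_fst (measurableSet_singleton a)
  have m1 : ∀ a : ℝ, MeasurableSet {p : ℝ × ℝ | p.2 = a} := fun a =>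
    measurable_snd (measurableSet_singleton a)
  have e11 := pr_eq_aux P _ Z hZm RA 1 hz1 _ (m1 1) {ω | D ω = 1}
    (fun ω h => by simp [hDdef ω, h])
  have e10 := pr_eq_aux P _ Z hZm RA 1 hz1 _ (m1 0) {ω | D ω = 0}
    (fun ω h => by simp [hDdef ω, h])
  have e01 := pr_eq_aux P _ Z hZm RA 0 hz0 _ (m0 1) {ω | D ω = 1}
    (fun ω h => by simp [hDdef ω, h])
  have hA : P (typeA D0 D1) = P {ω | D0 ω = 1} := by
    apply measure_congr
    filter_upwards [MON] with ω h
    apply propext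
    change (D0 ω = 1 ∧ D1 ω = 1) ↔ D0 ω = 1
    rcases hD0b ω with a | a <;> rcases hD1b ω with b | b <;> first | (exfalso; linarith) | simp [a, b]
  have hN : P (typeN D0 D1) = P {ω | D1 ω = 0} := by
    apply measure_congr
    filter_upwards [MON] with ω h
    apply propext
    change (D0 ω = 0 ∧ D1 ω = 0) ↔ D1 ω = 0
    rcases hD0b ω with a | a <;> rcases hD1b ω with b | b <;> first | (exfalso; linarith) | simp [a, b]
  have hDF : P (typeDF D0 D1) = 0 := by
    rw [measure_eq_zero_iff_ae_notMem]
    filter_upwards [MON] with ω h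
    rintro ⟨a, b⟩
    rw [a, b] at h
    norm_num at h
  have hC : P {ω | D1 ω = 1} = P (typeA D0 D1) + P (typeC D0 D1) := by
    have hm : MeasurableSet (typeC D0 D1) :=
      (hD0m (measurableSet_singleton 0)).inter (hD1m (measurableSet_singleton 1))
    rw [← measure_union _ hm]
    · congr 1
      ext ω
      change D1 ω = 1 ↔ (D0 ω = 1 ∧ D1 ω = 1) ∨ (D0 ω = 0 ∧ D1 ω = 1)
      have := hD0b ω
      tauto
    · rw [Set.disjoint_left]
      rintro ω ⟨a, _⟩ ⟨b, _⟩
      rw [a] at b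
      norm_num at b
  have hC' := congrArg ENNReal.toReal hC
  rw [ENNReal.toReal_add (measure_ne_top _ _) (measure_ne_top _ _)] at hC'
  have e01' : pr P {ω | Z ω = 0} {ω | D ω = 1} = (P (typeA D0 D1)).toReal := by
    rw [e01, hA]; rfl
  have e10' : pr P {ω | Z ω = 1} {ω | D ω = 0} = (P (typeN D0 D1)).toReal := by
    rw [e10, hN]; rfl
  have e11' : pr P {ω | Z ω = 1} {ω | D ω = 1} = (P {ω | D1 ω = 1}).toReal := e11
  refine ⟨by simp [hDF], ?_, e01'.symm, e10'.symm⟩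
  rw [e01', e11', hC']
  ring
end

section
/- Assume RA, ER and MON (D₁ ≥ D₀ almost surely). Then the testable implications of the LATE assumptions hold: for every Borel set A ⊆ ℝ, P(Y∈A, D=1 | Z=0) ≤ P(Y∈A, D=1 | Z=1) and P(Y∈A, D=0 | Z=1) ≤ P(Y∈A, D=0 | Z=0). -/
open MeasureTheory ProbabilityTheory

/-- If `s` agrees with the event that X lies in S on `{Z = z}`, and `X`, `Z` are independent, then
`P(s | Z = z) = P(X ∈ S)`. -/
lemma pr_eq_of_indep {Ω β : Type*} [MeasurableSpace Ω] [MeasurableSpace β]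
    (P : Measure Ω) [IsProbabilityMeasure P] (X : Ω → β) (Z : Ω → ℝ) (hZm : Measurable Z)
    (h : IndepFun X Z P) (z : ℝ) (hz : P {ω | Z ω = z} ≠ 0) (S : Set β) (hS : MeasurableSet S)
    (s : Set Ω) (hs : ∀ ω, Z ω = z → (ω ∈ s ↔ X ω ∈ S)) :
    pr P {ω | Z ω = z} s = (P (X ⁻¹' S)).toReal := by
  have hm : MeasurableSet {ω | Z ω = z} := hZm (measurableSet_singleton z)
  have h1 : {ω | Z ω = z} ∩ s = X ⁻¹' S ∩ Z ⁻¹' {z} := by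
    ext ω
    simp only [Set.mem_inter_iff, Set.mem_setOf_eq, Set.mem_preimage, Set.mem_singleton_iff]
    constructor
    · rintro ⟨a, b⟩
      exact ⟨(hs ω a).1 b, a⟩
    · rintro ⟨a, b⟩
      exact ⟨b, (hs ω b).2 a⟩
  have h2 := h.measure_inter_preimage_eq_mul S {z} hS (measurableSet_singleton z)
  have h3 : Z ⁻¹' {z} = {ω | Z ω = z} := rfl
  unfold pr
  rw [cond_apply hm, h1, h2, h3, mul_comm, mul_assoc, ENNReal.mul_inv_cancel hz
    (measure_ne_top _ _), mul_one]

theorem late_testable_implications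
    {Ω : Type*} [MeasurableSpace Ω] (P : Measure Ω) [IsProbabilityMeasure P]
    (Y11 Y10 Y01 Y00 D0 D1 Z D Y : Ω → ℝ)
    (hY11m : Measurable Y11) (hY10m : Measurable Y10)
    (hY01m : Measurable Y01) (hY00m : Measurable Y00)
    (hD0m : Measurable D0) (hD1m : Measurable D1) (hZm : Measurable Z)
    (hD0b : ∀ ω, D0 ω = 0 ∨ D0 ω = 1) (hD1b : ∀ ω, D1 ω = 0 ∨ D1 ω = 1)
    (hZb : ∀ ω, Z ω = 0 ∨ Z ω = 1)
    (hZpos : 0 < P {ω | Z ω = 1}) (hZlt : P {ω | Z ω = 1} < 1)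
    (hDdef : ∀ ω, D ω = D1 ω * Z ω + D0 ω * (1 - Z ω))
    (hYdef : ∀ ω, Y ω = (Y11 ω * Z ω + Y10 ω * (1 - Z ω)) * D ω
        + (Y01 ω * Z ω + Y00 ω * (1 - Z ω)) * (1 - D ω))
    (RA : IndepFun (fun ω => (Y11 ω, Y10 ω, Y01 ω, Y00 ω, D0 ω, D1 ω)) Z P)
    (ER1 : ∀ᵐ ω ∂P, Y11 ω = Y10 ω) (ER0 : ∀ᵐ ω ∂P, Y01 ω = Y00 ω)
    (MON : ∀ᵐ ω ∂P, D0 ω ≤ D1 ω)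
    (A : Set ℝ) (hA : MeasurableSet A) :
    pr P {ω | Z ω = 0} {ω | Y ω ∈ A ∧ D ω = 1}
      ≤ pr P {ω | Z ω = 1} {ω | Y ω ∈ A ∧ D ω = 1}
  ∧ pr P {ω | Z ω = 1} {ω | Y ω ∈ A ∧ D ω = 0}
      ≤ pr P {ω | Z ω = 0} {ω | Y ω ∈ A ∧ D ω = 0} := by
  have hz1 : P {ω | Z ω = 1} ≠ 0 := hZpos.ne'
  have hz0 : P {ω | Z ω = 0} ≠ 0 := by
    intro h0
    refine hZlt.ne ?_
    have hc : {ω | Z ω = 1}ᶜ ⊆ {ω | Z ω = 0} := by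
      intro ω hω
      exact (hZb ω).resolve_right hω
    exact (prob_compl_eq_zero_iff (hZm (measurableSet_singleton 1))).1 (measure_mono_null hc h0)
  have key := pr_eq_of_indep P _ Z hZm RA
  have e1 := key 0 hz0 {p | p.2.1 ∈ A ∧ p.2.2.2.2.1 = 1}
    ((hA.preimage (by fun_prop)).inter
      ((measurableSet_singleton (1 : ℝ)).preimage (by fun_prop)))
    {ω | Y ω ∈ A ∧ D ω = 1} (by
      intro ω hω
      have hD : D ω = D0 ω := by rw [hDdef, hω]; ring
      have hY := hYdef ω
      rcases hD0b ω with h | h <;> simp [hD, h, hω] at hY ⊢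
      rw [hY])
  have e2 := key 1 hz1 {p | p.1 ∈ A ∧ p.2.2.2.2.2 = 1}
    ((hA.preimage (by fun_prop)).inter
      ((measurableSet_singleton (1 : ℝ)).preimage (by fun_prop)))
    {ω | Y ω ∈ A ∧ D ω = 1} (by
      intro ω hω
      have hD : D ω = D1 ω := by rw [hDdef, hω]; ring
      have hY := hYdef ω
      rcases hD1b ω with h | h <;> simp [hD, h, hω] at hY ⊢
      rw [hY])
  have e3 := key 1 hz1 {p | p.2.2.1 ∈ A ∧ p.2.2.2.2.2 = 0}
    ((hA.preimage (by fun_prop)).inter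
      ((measurableSet_singleton (0 : ℝ)).preimage (by fun_prop)))
    {ω | Y ω ∈ A ∧ D ω = 0} (by
      intro ω hω
      have hD : D ω = D1 ω := by rw [hDdef, hω]; ring
      have hY := hYdef ω
      rcases hD1b ω with h | h <;> simp [hD, h, hω] at hY ⊢
      rw [hY])
  have e4 := key 0 hz0 {p | p.2.2.2.1 ∈ A ∧ p.2.2.2.2.1 = 0}
    ((hA.preimage (by fun_prop)).inter
      ((measurableSet_singleton (0 : ℝ)).preimage (by fun_prop)))
    {ω | Y ω ∈ A ∧ D ω = 0} (by
      intro ω hω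
      have hD : D ω = D0 ω := by rw [hDdef, hω]; ring
      have hY := hYdef ω
      rcases hD0b ω with h | h <;> simp [hD, h, hω] at hY ⊢
      rw [hY])
  rw [e1, e2, e3, e4]
  constructor
  · refine ENNReal.toReal_mono (measure_ne_top _ _) (measure_mono_ae ?_)
    filter_upwards [ER1, MON] with ω hE hM
    rintro ⟨ha, hd⟩
    simp only at ha hd
    refine ⟨?_, ?_⟩
    · simpa [hE] using ha
    · show D1 ω = 1
      rcases hD1b ω with h | h
      · linarith
      · exact h
  · refine ENNReal.toReal_mono (measure_ne_top _ _) (measure_mono_ae ?_)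
    filter_upwards [ER0, MON] with ω hE hM
    rintro ⟨ha, hd⟩
    simp only at ha hd
    refine ⟨?_, ?_⟩
    · simpa [← hE] using ha
    · show D0 ω = 0
      rcases hD0b ω with h | h
      · exact h
      · linarith
end

section
/- Assume RA, ER and MON (D₁ ≥ D₀ almost surely), that Y₁ and Y₀ are integrable, and that P(D=1 | Z=1) > P(D=1 | Z=0). Then p_c > 0 and the local average treatment effect for compliers is identified by the Wald ratio: E[Y₁ − Y₀ | T=c] = (E[Y | Z=1] − E[Y | Z=0]) / (E[D | Z=1] − E[D | Z=0]). -/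
open MeasureTheory ProbabilityTheory

theorem aux_map {Ω E : Type*} [MeasurableSpace Ω] [MeasurableSpace E] (P : Measure Ω)
    [IsProbabilityMeasure P] (V : Ω → E) (Z : Ω → ℝ) (hV : Measurable V) (hZ : Measurable Z)
    (RA : IndepFun V Z P) (z : ℝ) (hz : P {ω | Z ω = z} ≠ 0) :
    (P[|{ω | Z ω = z}]).map V = P.map V := by
  have hA : MeasurableSet {ω | Z ω = z} := hZ (measurableSet_singleton z)
  ext B hB
  rw [Measure.map_apply hV hB, Measure.map_apply hV hB, cond_apply hA]
  have h := RA.measure_inter_preimage_eq_mul B {z} hB (measurableSet_singleton z)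
  have e : Z ⁻¹' {z} = {ω | Z ω = z} := rfl
  rw [e] at h
  rw [Set.inter_comm, h, mul_comm (P (V ⁻¹' B)), ← mul_assoc,
    ENNReal.inv_mul_cancel hz (measure_ne_top _ _), one_mul]

theorem aux_ce {Ω E : Type*} [MeasurableSpace Ω] [MeasurableSpace E] (P : Measure Ω)
    [IsProbabilityMeasure P] (V : Ω → E) (Z : Ω → ℝ) (hV : Measurable V) (hZ : Measurable Z)
    (RA : IndepFun V Z P) (z : ℝ) (hz : P {ω | Z ω = z} ≠ 0)
    (f : Ω → ℝ) (g : E → ℝ) (hg : Measurable g) (hfg : ∀ ω, Z ω = z → f ω = g (V ω)) :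
    ce P {ω | Z ω = z} f = ∫ ω, g (V ω) ∂P := by
  have hA : MeasurableSet {ω | Z ω = z} := hZ (measurableSet_singleton z)
  have h1 : ce P {ω | Z ω = z} f = ∫ ω, g (V ω) ∂(P[|{ω | Z ω = z}]) := by
    unfold ce
    apply integral_congr_ae
    filter_upwards [ae_cond_mem hA] with ω hω using hfg ω hω
  rw [h1, ← integral_map hV.aemeasurable hg.aestronglyMeasurable,
    aux_map P V Z hV hZ RA z hz, integral_map hV.aemeasurable hg.aestronglyMeasurable]

theorem aux_pr {Ω : Type*} [MeasurableSpace Ω] (P : Measure Ω) (t : Set Ω) (D : Ω → ℝ)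
    (hD : Measurable D) (hb : ∀ ω, D ω = 0 ∨ D ω = 1) :
    pr P t {ω | D ω = 1} = ce P t D := by
  have e : D = Set.indicator {ω | D ω = 1} 1 := by
    funext ω
    rcases hb ω with h | h <;> simp [h]
  unfold pr ce
  conv_rhs => rw [e]
  exact (integral_indicator_one (hD (measurableSet_singleton 1))).symm

theorem late_wald_identification
    {Ω : Type*} [MeasurableSpace Ω] (P : Measure Ω) [IsProbabilityMeasure P]
    (Y11 Y10 Y01 Y00 D0 D1 Z D Y : Ω → ℝ)
    (hY11m : Measurable Y11) (hY10m : Measurable Y10)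
    (hY01m : Measurable Y01) (hY00m : Measurable Y00)
    (hD0m : Measurable D0) (hD1m : Measurable D1) (hZm : Measurable Z)
    (hD0b : ∀ ω, D0 ω = 0 ∨ D0 ω = 1) (hD1b : ∀ ω, D1 ω = 0 ∨ D1 ω = 1)
    (hZb : ∀ ω, Z ω = 0 ∨ Z ω = 1)
    (hZpos : 0 < P {ω | Z ω = 1}) (hZlt : P {ω | Z ω = 1} < 1)
    (hDdef : ∀ ω, D ω = D1 ω * Z ω + D0 ω * (1 - Z ω))
    (hYdef : ∀ ω, Y ω = (Y11 ω * Z ω + Y10 ω * (1 - Z ω)) * D ω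
        + (Y01 ω * Z ω + Y00 ω * (1 - Z ω)) * (1 - D ω))
    (RA : IndepFun (fun ω => (Y11 ω, Y10 ω, Y01 ω, Y00 ω, D0 ω, D1 ω)) Z P)
    (ER1 : ∀ᵐ ω ∂P, Y11 ω = Y10 ω) (ER0 : ∀ᵐ ω ∂P, Y01 ω = Y00 ω)
    (MON : ∀ᵐ ω ∂P, D0 ω ≤ D1 ω)
    (hY1int : Integrable Y11 P) (hY0int : Integrable Y00 P)
    (hfs : pr P {ω | Z ω = 1} {ω | D ω = 1} > pr P {ω | Z ω = 0} {ω | D ω = 1}) :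
    0 < (P (typeC D0 D1)).toReal
  ∧ ce P (typeC D0 D1) (fun ω => Y11 ω - Y00 ω)
      = (ce P {ω | Z ω = 1} Y - ce P {ω | Z ω = 0} Y)
        / (ce P {ω | Z ω = 1} D - ce P {ω | Z ω = 0} D) := by
  classical
  set V : Ω → ℝ × ℝ × ℝ × ℝ × ℝ × ℝ :=
    fun ω => (Y11 ω, Y10 ω, Y01 ω, Y00 ω, D0 ω, D1 ω) with hVdef
  have hV : Measurable V := by fun_prop
  have hz1 : P {ω | Z ω = 1} ≠ 0 := hZpos.ne'
  have hz0 : P {ω | Z ω = 0} ≠ 0 := by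
    intro h
    have hc : {ω | Z ω = 1}ᶜ = {ω | Z ω = 0} := by
      ext ω
      rcases hZb ω with h | h <;> simp [h]
    have := (prob_compl_eq_zero_iff (μ := P) (hZm (measurableSet_singleton 1))).1
      (by rw [← h, ← hc]; rfl)
    exact hZlt.ne this
  have hDm : Measurable D := by
    have : D = fun ω => D1 ω * Z ω + D0 ω * (1 - Z ω) := funext hDdef
    rw [this]; fun_prop
  have hDb : ∀ ω, D ω = 0 ∨ D ω = 1 := by
    intro ω
    rw [hDdef]
    rcases hZb ω with h | h <;> simp [h, hD0b ω, hD1b ω]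
  have eD1 : ce P {ω | Z ω = 1} D = ∫ ω, D1 ω ∂P :=
    aux_ce P V Z hV hZm RA 1 hz1 D (fun v => v.2.2.2.2.2) (by fun_prop)
      (fun ω h => by simp [hDdef, h, hVdef])
  have eD0 : ce P {ω | Z ω = 0} D = ∫ ω, D0 ω ∂P :=
    aux_ce P V Z hV hZm RA 0 hz0 D (fun v => v.2.2.2.2.1) (by fun_prop)
      (fun ω h => by simp [hDdef, h, hVdef])
  have eY1 : ce P {ω | Z ω = 1} Y = ∫ ω, (Y11 ω * D1 ω + Y01 ω * (1 - D1 ω)) ∂P :=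
    aux_ce P V Z hV hZm RA 1 hz1 Y
      (fun v => v.1 * v.2.2.2.2.2 + v.2.2.1 * (1 - v.2.2.2.2.2)) (by fun_prop)
      (fun ω h => by simp [hYdef, hDdef, h, hVdef])
  have eY0 : ce P {ω | Z ω = 0} Y = ∫ ω, (Y10 ω * D0 ω + Y00 ω * (1 - D0 ω)) ∂P :=
    aux_ce P V Z hV hZm RA 0 hz0 Y
      (fun v => v.2.1 * v.2.2.2.2.1 + v.2.2.2.1 * (1 - v.2.2.2.2.1)) (by fun_prop)
      (fun ω h => by simp [hYdef, hDdef, h, hVdef])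
  have eY1' : ∫ ω, (Y11 ω * D1 ω + Y01 ω * (1 - D1 ω)) ∂P
      = ∫ ω, (Y11 ω * D1 ω + Y00 ω * (1 - D1 ω)) ∂P := by
    apply integral_congr_ae
    filter_upwards [ER0] with ω h
    rw [h]
  have eY0' : ∫ ω, (Y10 ω * D0 ω + Y00 ω * (1 - D0 ω)) ∂P
      = ∫ ω, (Y11 ω * D0 ω + Y00 ω * (1 - D0 ω)) ∂P := by
    apply integral_congr_ae
    filter_upwards [ER1] with ω h
    rw [h]
  have key : ∀ (f E : Ω → ℝ), Integrable f P → Measurable E → (∀ ω, E ω = 0 ∨ E ω = 1) →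
      Integrable (fun ω => f ω * E ω) P := by
    intro f E hf hE hb
    refine hf.mul_bdd (c := 1) hE.aestronglyMeasurable (Filter.Eventually.of_forall fun ω => ?_)
    rcases hb ω with h | h <;> simp [h]
  have hflip : ∀ E : Ω → ℝ, (∀ ω, E ω = 0 ∨ E ω = 1) → ∀ ω, 1 - E ω = 0 ∨ 1 - E ω = 1 := by
    intro E hb ω
    rcases hb ω with h | h <;> simp [h]
  have hone : Integrable (fun _ : Ω => (1 : ℝ)) P := integrable_const 1
  have iD1 : Integrable D1 P := by simpa using key _ D1 hone hD1m hD1b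
  have iD0 : Integrable D0 P := by simpa using key _ D0 hone hD0m hD0b
  have iA1 : Integrable (fun ω => Y11 ω * D1 ω + Y00 ω * (1 - D1 ω)) P :=
    (key _ D1 hY1int hD1m hD1b).add
      (key _ (fun ω => 1 - D1 ω) hY0int (by fun_prop) (hflip _ hD1b))
  have iA0 : Integrable (fun ω => Y11 ω * D0 ω + Y00 ω * (1 - D0 ω)) P :=
    (key _ D0 hY1int hD0m hD0b).add
      (key _ (fun ω => 1 - D0 ω) hY0int (by fun_prop) (hflip _ hD0b))
  have hC : MeasurableSet (typeC D0 D1) :=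
    (hD0m (measurableSet_singleton 0)).inter (hD1m (measurableSet_singleton 1))
  have hind : ∀ᵐ ω ∂P, ∀ f : Ω → ℝ,
      (typeC D0 D1).indicator f ω = f ω * (D1 ω - D0 ω) := by
    filter_upwards [MON] with ω hm f
    rcases hD0b ω with h0 | h0 <;> rcases hD1b ω with h1 | h1 <;>
      simp [Set.indicator, typeC, h0, h1]
    rw [h0, h1] at hm
    norm_num at hm
  have dD : ∫ ω, D1 ω ∂P - ∫ ω, D0 ω ∂P = (P (typeC D0 D1)).toReal := by
    have h1 : ∫ ω, (typeC D0 D1).indicator (1 : Ω → ℝ) ω ∂P = (P (typeC D0 D1)).toReal :=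
      integral_indicator_one hC
    rw [← h1, ← integral_sub iD1 iD0]
    apply integral_congr_ae
    filter_upwards [hind] with ω h
    simp [h]
  have dY : ce P {ω | Z ω = 1} Y - ce P {ω | Z ω = 0} Y
      = ∫ ω in typeC D0 D1, (Y11 ω - Y00 ω) ∂P := by
    rw [eY1, eY0, eY1', eY0', ← integral_sub iA1 iA0, ← integral_indicator hC]
    apply integral_congr_ae
    filter_upwards [hind] with ω h
    rw [h]
    ring
  rw [aux_pr P _ D hDm hDb, aux_pr P _ D hDm hDb, eD1, eD0] at hfs
  refine ⟨by rw [← dD]; linarith, ?_⟩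
  rw [dY, eD1, eD0, dD]
  unfold ce
  rw [ProbabilityTheory.cond, integral_smul_measure, ENNReal.toReal_inv, smul_eq_mul,
    div_eq_inv_mul]
end

section
/- Assume RA and ER. Then the following testable implication of these two assumptions holds: for each d ∈ {0,1} and every Borel set A ⊆ ℝ, P(Y∈A, D=d | Z=1) + P(Y∈ℝ∖A, D=d | Z=0) ≤ 1. (This is the set-wise formulation of the density condition max_d ∫ sup_z f_{Y,D|Z}(y,d|z) dμ(y) ≤ 1.) -/
open MeasureTheory ProbabilityTheory

theorem pr_le_of_indep {Ω : Type*} [MeasurableSpace Ω] (P : Measure Ω) [IsProbabilityMeasure P]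
    (W Z : Ω → ℝ) (hZm : Measurable Z) (h : IndepFun W Z P)
    (B : Set ℝ) (hB : MeasurableSet B) (z : ℝ) (s : Set Ω)
    (hs : ∀ ω, Z ω = z → ω ∈ s → W ω ∈ B) :
    pr P {ω | Z ω = z} s ≤ (P (W ⁻¹' B)).toReal := by
  have hz : MeasurableSet {ω | Z ω = z} := hZm (measurableSet_singleton z)
  unfold pr
  apply ENNReal.toReal_mono (measure_ne_top _ _)
  rw [cond_apply hz]
  have h1 : P ({ω | Z ω = z} ∩ s) ≤ P (W ⁻¹' B) * P {ω | Z ω = z} := by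
    have h2 := h.measure_inter_preimage_eq_mul B {z} hB (measurableSet_singleton z)
    have h3 : Z ⁻¹' {z} = {ω | Z ω = z} := rfl
    rw [h3] at h2
    rw [← h2]
    exact measure_mono fun ω hω => ⟨hs ω hω.1 hω.2, hω.1⟩
  calc _ ≤ (P {ω | Z ω = z})⁻¹ * (P (W ⁻¹' B) * P {ω | Z ω = z}) := by gcongr
    _ = P (W ⁻¹' B) * ((P {ω | Z ω = z})⁻¹ * P {ω | Z ω = z}) := by ring
    _ ≤ P (W ⁻¹' B) * 1 := by
      gcongr
      exact ENNReal.inv_mul_le_one _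
    _ = _ := mul_one _

theorem sum_eq_one_of_ae {Ω : Type*} [MeasurableSpace Ω] (P : Measure Ω) [IsProbabilityMeasure P]
    (V W : Ω → ℝ) (hV : Measurable V) (h : ∀ᵐ ω ∂P, V ω = W ω) (A : Set ℝ)
    (hA : MeasurableSet A) :
    (P (V ⁻¹' A)).toReal + (P (W ⁻¹' Aᶜ)).toReal = 1 := by
  have h1 : P (W ⁻¹' Aᶜ) = P (V ⁻¹' A)ᶜ := by
    apply measure_congr
    filter_upwards [h] with ω hω
    change (W ω ∈ Aᶜ) = (V ω ∈ Aᶜ)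
    rw [hω]
  rw [h1]
  exact probReal_add_probReal_compl (hV hA)

theorem ra_er_testable_implication
    {Ω : Type*} [MeasurableSpace Ω] (P : Measure Ω) [IsProbabilityMeasure P]
    (Y11 Y10 Y01 Y00 D0 D1 Z D Y : Ω → ℝ)
    (hY11m : Measurable Y11) (hY10m : Measurable Y10)
    (hY01m : Measurable Y01) (hY00m : Measurable Y00)
    (hD0m : Measurable D0) (hD1m : Measurable D1) (hZm : Measurable Z)
    (hD0b : ∀ ω, D0 ω = 0 ∨ D0 ω = 1) (hD1b : ∀ ω, D1 ω = 0 ∨ D1 ω = 1)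
    (hZb : ∀ ω, Z ω = 0 ∨ Z ω = 1)
    (hZpos : 0 < P {ω | Z ω = 1}) (hZlt : P {ω | Z ω = 1} < 1)
    (hDdef : ∀ ω, D ω = D1 ω * Z ω + D0 ω * (1 - Z ω))
    (hYdef : ∀ ω, Y ω = (Y11 ω * Z ω + Y10 ω * (1 - Z ω)) * D ω
        + (Y01 ω * Z ω + Y00 ω * (1 - Z ω)) * (1 - D ω))
    (RA : IndepFun (fun ω => (Y11 ω, Y10 ω, Y01 ω, Y00 ω, D0 ω, D1 ω)) Z P)
    (ER1 : ∀ᵐ ω ∂P, Y11 ω = Y10 ω) (ER0 : ∀ᵐ ω ∂P, Y01 ω = Y00 ω)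
    (A : Set ℝ) (hA : MeasurableSet A) :
    ∀ d : ℝ, d = 0 ∨ d = 1 →
      pr P {ω | Z ω = 1} {ω | Y ω ∈ A ∧ D ω = d}
        + pr P {ω | Z ω = 0} {ω | Y ω ∉ A ∧ D ω = d} ≤ 1 := by
  have I11 : IndepFun Y11 Z P := RA.comp (φ := fun p : ℝ × ℝ × ℝ × ℝ × ℝ × ℝ => p.1) (ψ := id) (by fun_prop) measurable_id
  have I10 : IndepFun Y10 Z P :=
    RA.comp (φ := fun p : ℝ × ℝ × ℝ × ℝ × ℝ × ℝ => p.2.1) (ψ := id) (by fun_prop) measurable_id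
  have I01 : IndepFun Y01 Z P :=
    RA.comp (φ := fun p : ℝ × ℝ × ℝ × ℝ × ℝ × ℝ => p.2.2.1) (ψ := id) (by fun_prop) measurable_id
  have I00 : IndepFun Y00 Z P :=
    RA.comp (φ := fun p : ℝ × ℝ × ℝ × ℝ × ℝ × ℝ => p.2.2.2.1) (ψ := id) (by fun_prop) measurable_id
  rintro d (rfl | rfl)
  · refine le_trans (add_le_add ?_ ?_) (sum_eq_one_of_ae P Y01 Y00 hY01m ER0 A hA).le
    · apply pr_le_of_indep P Y01 Z hZm I01 A hA
      rintro ω hz ⟨hy, hd⟩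
      simpa [hYdef ω, hd, hz] using hy
    · apply pr_le_of_indep P Y00 Z hZm I00 Aᶜ hA.compl
      rintro ω hz ⟨hy, hd⟩
      simpa [hYdef ω, hd, hz] using hy
  · refine le_trans (add_le_add ?_ ?_) (sum_eq_one_of_ae P Y11 Y10 hY11m ER1 A hA).le
    · apply pr_le_of_indep P Y11 Z hZm I11 A hA
      rintro ω hz ⟨hy, hd⟩
      simpa [hYdef ω, hd, hz] using hy
    · apply pr_le_of_indep P Y10 Z hZm I10 Aᶜ hA.compl
      rintro ω hz ⟨hy, hd⟩
      simpa [hYdef ω, hd, hz] using hy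
end

section
/- Assume RA and ER. Then for every Borel set A ⊆ ℝ: P(T=a) ≤ P(Y∈A, D=1 | Z=1) + P(Y∈ℝ∖A, D=1 | Z=0), and P(T=n) ≤ P(Y∈A, D=0 | Z=1) + P(Y∈ℝ∖A, D=0 | Z=0). -/
open MeasureTheory ProbabilityTheory

/-- Under independence, `P(W ∈ S) ≤ P(E | Z = z)` if `{W ∈ S, Z = z} ⊆ E`. -/
lemma le_pr_of_indep {Ω β : Type*} [MeasurableSpace Ω] [MeasurableSpace β] (P : Measure Ω)
    [IsProbabilityMeasure P] (W : Ω → β) (Z : Ω → ℝ) (hZm : Measurable Z)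
    (RA : IndepFun W Z P) (z : ℝ) (hz : P {ω | Z ω = z} ≠ 0) (S : Set β) (hS : MeasurableSet S)
    (E : Set Ω) (hE : ∀ ω, W ω ∈ S → Z ω = z → ω ∈ E) :
    (P (W ⁻¹' S)).toReal ≤ pr P {ω | Z ω = z} E := by
  have hm : MeasurableSet {ω | Z ω = z} := hZm (measurableSet_singleton z)
  have h := RA.measure_inter_preimage_eq_mul S {z} hS (measurableSet_singleton z)
  have hz' : Z ⁻¹' {z} = {ω | Z ω = z} := rfl
  rw [hz'] at h
  unfold pr
  have := cond_isProbabilityMeasure hz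
  apply ENNReal.toReal_mono (measure_ne_top _ _)
  calc P (W ⁻¹' S) = (P {ω | Z ω = z})⁻¹ * P ({ω | Z ω = z} ∩ W ⁻¹' S) := by
        rw [Set.inter_comm, h, mul_comm (P (W ⁻¹' S)), ← mul_assoc,
          ENNReal.inv_mul_cancel hz (measure_ne_top _ _), one_mul]
    _ ≤ (P {ω | Z ω = z})⁻¹ * P ({ω | Z ω = z} ∩ E) := by
        refine mul_le_mul_right (measure_mono ?_) _
        rintro ω ⟨h1, h2⟩
        exact ⟨h1, hE ω h2 h1⟩
    _ = P[|{ω | Z ω = z}] E := (cond_apply hm P E).symm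

/-- Union bound up to a null set. -/
lemma toReal_le_add_of_ae {Ω : Type*} [MeasurableSpace Ω] (P : Measure Ω)
    [IsProbabilityMeasure P] (s t u : Set Ω) (h : ∀ᵐ ω ∂P, ω ∈ s → ω ∈ t ∪ u) :
    (P s).toReal ≤ (P t).toReal + (P u).toReal := by
  rw [← ENNReal.toReal_add (measure_ne_top _ _) (measure_ne_top _ _)]
  apply ENNReal.toReal_mono (by finiteness)
  exact (measure_mono_ae h).trans (measure_union_le t u)

theorem always_never_taker_probability_bounds
    {Ω : Type*} [MeasurableSpace Ω] (P : Measure Ω) [IsProbabilityMeasure P]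
    (Y11 Y10 Y01 Y00 D0 D1 Z D Y : Ω → ℝ)
    (hY11m : Measurable Y11) (hY10m : Measurable Y10)
    (hY01m : Measurable Y01) (hY00m : Measurable Y00)
    (hD0m : Measurable D0) (hD1m : Measurable D1) (hZm : Measurable Z)
    (hD0b : ∀ ω, D0 ω = 0 ∨ D0 ω = 1) (hD1b : ∀ ω, D1 ω = 0 ∨ D1 ω = 1)
    (hZb : ∀ ω, Z ω = 0 ∨ Z ω = 1)
    (hZpos : 0 < P {ω | Z ω = 1}) (hZlt : P {ω | Z ω = 1} < 1)
    (hDdef : ∀ ω, D ω = D1 ω * Z ω + D0 ω * (1 - Z ω))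
    (hYdef : ∀ ω, Y ω = (Y11 ω * Z ω + Y10 ω * (1 - Z ω)) * D ω
        + (Y01 ω * Z ω + Y00 ω * (1 - Z ω)) * (1 - D ω))
    (RA : IndepFun (fun ω => (Y11 ω, Y10 ω, Y01 ω, Y00 ω, D0 ω, D1 ω)) Z P)
    (ER1 : ∀ᵐ ω ∂P, Y11 ω = Y10 ω) (ER0 : ∀ᵐ ω ∂P, Y01 ω = Y00 ω)
    (A : Set ℝ) (hA : MeasurableSet A) :
    (P (typeA D0 D1)).toReal
      ≤ pr P {ω | Z ω = 1} {ω | Y ω ∈ A ∧ D ω = 1}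
        + pr P {ω | Z ω = 0} {ω | Y ω ∉ A ∧ D ω = 1}
  ∧ (P (typeN D0 D1)).toReal
      ≤ pr P {ω | Z ω = 1} {ω | Y ω ∈ A ∧ D ω = 0}
        + pr P {ω | Z ω = 0} {ω | Y ω ∉ A ∧ D ω = 0} := by
  have hZ0 : P {ω | Z ω = 0} ≠ 0 := by
    intro h0
    refine hZlt.ne ?_
    have hm : MeasurableSet {ω | Z ω = 1} := hZm (measurableSet_singleton 1)
    rw [← prob_compl_eq_zero_iff hm]
    refine measure_mono_null ?_ h0
    intro ω hω
    exact (hZb ω).resolve_right hω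
  constructor
  · refine (toReal_le_add_of_ae P _
      ((fun ω => (Y11 ω, Y10 ω, Y01 ω, Y00 ω, D0 ω, D1 ω)) ⁻¹'
        {w | w.1 ∈ A ∧ w.2.2.2.2.2 = 1})
      ((fun ω => (Y11 ω, Y10 ω, Y01 ω, Y00 ω, D0 ω, D1 ω)) ⁻¹'
        {w | w.2.1 ∈ Aᶜ ∧ w.2.2.2.2.1 = 1}) ?_).trans (add_le_add
      (le_pr_of_indep P _ Z hZm RA 1 hZpos.ne' _ ?_ _ ?_)
      (le_pr_of_indep P _ Z hZm RA 0 hZ0 _ ?_ _ ?_))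
    · filter_upwards [ER1] with ω hω hs
      obtain ⟨h0, h1⟩ := hs
      by_cases hy : Y11 ω ∈ A
      · exact Or.inl ⟨hy, h1⟩
      · exact Or.inr ⟨by simpa [← hω] using hy, h0⟩
    · exact MeasurableSet.inter ((by fun_prop : Measurable fun w : ℝ × ℝ × ℝ × ℝ × ℝ × ℝ => w.1) hA)
        ((by fun_prop : Measurable fun w : ℝ × ℝ × ℝ × ℝ × ℝ × ℝ => w.2.2.2.2.2)
          (measurableSet_singleton 1))
    · rintro ω ⟨h1, h2⟩ hz
      simp only at h1 h2
      have hD : D ω = 1 := by rw [hDdef, hz, h2]; ring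
      refine ⟨?_, hD⟩
      rw [hYdef, hD, hz]
      simpa using h1
    · exact MeasurableSet.inter
        ((by fun_prop : Measurable fun w : ℝ × ℝ × ℝ × ℝ × ℝ × ℝ => w.2.1) hA.compl)
        ((by fun_prop : Measurable fun w : ℝ × ℝ × ℝ × ℝ × ℝ × ℝ => w.2.2.2.2.1)
          (measurableSet_singleton 1))
    · rintro ω ⟨h1, h2⟩ hz
      simp only at h1 h2
      have hD : D ω = 1 := by rw [hDdef, hz, h2]; ring
      refine ⟨?_, hD⟩
      rw [hYdef, hD, hz]
      simpa using h1
  · refine (toReal_le_add_of_ae P _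
      ((fun ω => (Y11 ω, Y10 ω, Y01 ω, Y00 ω, D0 ω, D1 ω)) ⁻¹'
        {w | w.2.2.1 ∈ A ∧ w.2.2.2.2.2 = 0})
      ((fun ω => (Y11 ω, Y10 ω, Y01 ω, Y00 ω, D0 ω, D1 ω)) ⁻¹'
        {w | w.2.2.2.1 ∈ Aᶜ ∧ w.2.2.2.2.1 = 0}) ?_).trans (add_le_add
      (le_pr_of_indep P _ Z hZm RA 1 hZpos.ne' _ ?_ _ ?_)
      (le_pr_of_indep P _ Z hZm RA 0 hZ0 _ ?_ _ ?_))
    · filter_upwards [ER0] with ω hω hs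
      obtain ⟨h0, h1⟩ := hs
      by_cases hy : Y01 ω ∈ A
      · exact Or.inl ⟨hy, h1⟩
      · exact Or.inr ⟨by simpa [← hω] using hy, h0⟩
    · exact MeasurableSet.inter ((by fun_prop : Measurable fun w : ℝ × ℝ × ℝ × ℝ × ℝ × ℝ => w.2.2.1) hA)
        ((by fun_prop : Measurable fun w : ℝ × ℝ × ℝ × ℝ × ℝ × ℝ => w.2.2.2.2.2)
          (measurableSet_singleton 0))
    · rintro ω ⟨h1, h2⟩ hz
      simp only at h1 h2
      have hD : D ω = 0 := by rw [hDdef, hz, h2]; ring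
      refine ⟨?_, hD⟩
      rw [hYdef, hD, hz]
      simpa using h1
    · exact MeasurableSet.inter
        ((by fun_prop : Measurable fun w : ℝ × ℝ × ℝ × ℝ × ℝ × ℝ => w.2.2.2.1) hA.compl)
        ((by fun_prop : Measurable fun w : ℝ × ℝ × ℝ × ℝ × ℝ × ℝ => w.2.2.2.2.1)
          (measurableSet_singleton 0))
    · rintro ω ⟨h1, h2⟩ hz
      simp only at h1 h2
      have hD : D ω = 0 := by rw [hDdef, hz, h2]; ring
      refine ⟨?_, hD⟩
      rw [hYdef, hD, hz]
      simpa using h1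
end

section
/- Assume RA and ER. (i) If p_a > 0, then for every y ∈ ℝ: max{ (P(Y≤y, D=1 | Z=1) − p_c)/p_a, (P(Y≤y, D=1 | Z=0) − p_df)/p_a, 0 } ≤ P(Y₁≤y | T=a) ≤ min{ P(Y≤y, D=1 | Z=1)/p_a, P(Y≤y, D=1 | Z=0)/p_a, 1 }. (ii) If p_n > 0, then for every y ∈ ℝ: max{ (P(Y≤y, D=0 | Z=0) − p_c)/p_n, (P(Y≤y, D=0 | Z=1) − p_df)/p_n, 0 } ≤ P(Y₀≤y | T=n) ≤ min{ P(Y≤y, D=0 | Z=0)/p_n, P(Y≤y, D=0 | Z=1)/p_n, 1 }. (iii) If in addition p_c > 0, then for every y: P(Y₁≤y | T=c) = (P(Y≤y, D=1 | Z=1) − p_a·P(Y₁≤y | T=a))/p_c and P(Y₀≤y | T=c) = (P(Y≤y, D=0 | Z=0) − p_n·P(Y₀≤y | T=n))/p_c; and if p_df > 0, then for every y: P(Y₁≤y | T=df) = (P(Y≤y, D=1 | Z=0) − p_a·P(Y₁≤y | T=a))/p_df and P(Y₀≤y | T=df) = (P(Y≤y, D=0 | Z=1) − p_n·P(Y₀≤y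 | T=n))/p_df. -/
open MeasureTheory ProbabilityTheory

lemma pr_of_indep {Ω E : Type*} [MeasurableSpace Ω] [MeasurableSpace E] (P : Measure Ω)
    [IsProbabilityMeasure P] (X : Ω → E) (Z : Ω → ℝ) (hZm : Measurable Z)
    (RA : IndepFun X Z P) (z : ℝ) (hz : P {ω | Z ω = z} ≠ 0) (A : Set E) (hA : MeasurableSet A)
    (S : Set Ω) (h : ∀ ω, Z ω = z → (ω ∈ S ↔ X ω ∈ A)) :
    pr P {ω | Z ω = z} S = P.real (X ⁻¹' A) := by
  have hm : MeasurableSet {ω | Z ω = z} := hZm (measurableSet_singleton z)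
  have h1 : {ω | Z ω = z} ∩ S = X ⁻¹' A ∩ Z ⁻¹' {z} := by
    ext ω
    have := h ω
    simp only [Set.mem_inter_iff, Set.mem_ofPred_eq, Set.mem_preimage, Set.mem_singleton_iff]
    tauto
  have h2 := RA.measure_inter_preimage_eq_mul A {z} hA (measurableSet_singleton z)
  have h3 : Z ⁻¹' {z} = {ω | Z ω = z} := rfl
  unfold pr Measure.real
  rw [cond_apply hm, h1, h2, h3, mul_comm (P (X ⁻¹' A)), ← mul_assoc,
    ENNReal.inv_mul_cancel hz (measure_ne_top _ _), one_mul]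

lemma pr_mul {Ω : Type*} [MeasurableSpace Ω] (P : Measure Ω)
    [IsProbabilityMeasure P] (t s : Set Ω) (ht : MeasurableSet t) (p : ℝ)
    (hp : p = (P t).toReal) (h0 : 0 < p) :
    pr P t s = P.real (t ∩ s) / p := by
  unfold pr Measure.real
  rw [cond_apply ht, ENNReal.toReal_mul, ENNReal.toReal_inv, ← hp]
  field_simp

lemma bounds_aux (p c d a x e : ℝ) (hp : 0 < p) (hx : 0 ≤ x) (hxc : x ≤ c)
    (he : 0 ≤ e) (hed : e ≤ d) (ha : 0 ≤ a) (hap : a ≤ p) :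
    max (max ((a + x - c) / p) ((a + e - d) / p)) 0 ≤ a / p
      ∧ a / p ≤ min (min ((a + x) / p) ((a + e) / p)) 1 := by
  refine ⟨max_le (max_le ?_ ?_) (by positivity), le_min (le_min ?_ ?_) ?_⟩
  · gcongr; linarith
  · gcongr; linarith
  · gcongr; linarith
  · gcongr; linarith
  · rw [div_le_one hp]; exact hap

theorem distribution_bounds_ra_er
    {Ω : Type*} [MeasurableSpace Ω] (P : Measure Ω) [IsProbabilityMeasure P]
    (Y11 Y10 Y01 Y00 D0 D1 Z D Y : Ω → ℝ)
    (hY11m : Measurable Y11) (hY10m : Measurable Y10)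
    (hY01m : Measurable Y01) (hY00m : Measurable Y00)
    (hD0m : Measurable D0) (hD1m : Measurable D1) (hZm : Measurable Z)
    (hD0b : ∀ ω, D0 ω = 0 ∨ D0 ω = 1) (hD1b : ∀ ω, D1 ω = 0 ∨ D1 ω = 1)
    (hZb : ∀ ω, Z ω = 0 ∨ Z ω = 1)
    (hZpos : 0 < P {ω | Z ω = 1}) (hZlt : P {ω | Z ω = 1} < 1)
    (hDdef : ∀ ω, D ω = D1 ω * Z ω + D0 ω * (1 - Z ω))
    (hYdef : ∀ ω, Y ω = (Y11 ω * Z ω + Y10 ω * (1 - Z ω)) * D ω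
        + (Y01 ω * Z ω + Y00 ω * (1 - Z ω)) * (1 - D ω))
    (RA : IndepFun (fun ω => (Y11 ω, Y10 ω, Y01 ω, Y00 ω, D0 ω, D1 ω)) Z P)
    (ER1 : ∀ᵐ ω ∂P, Y11 ω = Y10 ω) (ER0 : ∀ᵐ ω ∂P, Y01 ω = Y00 ω)
    (pa pn pc pdf : ℝ)
    (hpa : pa = (P (typeA D0 D1)).toReal) (hpn : pn = (P (typeN D0 D1)).toReal)
    (hpc : pc = (P (typeC D0 D1)).toReal) (hpdf : pdf = (P (typeDF D0 D1)).toReal) :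
    (0 < pa → ∀ y : ℝ,
      max (max ((pr P {ω | Z ω = 1} {ω | Y ω ≤ y ∧ D ω = 1} - pc) / pa)
              ((pr P {ω | Z ω = 0} {ω | Y ω ≤ y ∧ D ω = 1} - pdf) / pa)) 0
        ≤ pr P (typeA D0 D1) {ω | Y11 ω ≤ y}
      ∧ pr P (typeA D0 D1) {ω | Y11 ω ≤ y}
        ≤ min (min (pr P {ω | Z ω = 1} {ω | Y ω ≤ y ∧ D ω = 1} / pa)
                  (pr P {ω | Z ω = 0} {ω | Y ω ≤ y ∧ D ω = 1} / pa)) 1)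
  ∧ (0 < pn → ∀ y : ℝ,
      max (max ((pr P {ω | Z ω = 0} {ω | Y ω ≤ y ∧ D ω = 0} - pc) / pn)
              ((pr P {ω | Z ω = 1} {ω | Y ω ≤ y ∧ D ω = 0} - pdf) / pn)) 0
        ≤ pr P (typeN D0 D1) {ω | Y00 ω ≤ y}
      ∧ pr P (typeN D0 D1) {ω | Y00 ω ≤ y}
        ≤ min (min (pr P {ω | Z ω = 0} {ω | Y ω ≤ y ∧ D ω = 0} / pn)
                  (pr P {ω | Z ω = 1} {ω | Y ω ≤ y ∧ D ω = 0} / pn)) 1)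
  ∧ (0 < pa → 0 < pn → 0 < pc → ∀ y : ℝ,
      pr P (typeC D0 D1) {ω | Y11 ω ≤ y}
        = (pr P {ω | Z ω = 1} {ω | Y ω ≤ y ∧ D ω = 1}
            - pa * pr P (typeA D0 D1) {ω | Y11 ω ≤ y}) / pc
      ∧ pr P (typeC D0 D1) {ω | Y00 ω ≤ y}
        = (pr P {ω | Z ω = 0} {ω | Y ω ≤ y ∧ D ω = 0}
            - pn * pr P (typeN D0 D1) {ω | Y00 ω ≤ y}) / pc)
  ∧ (0 < pa → 0 < pn → 0 < pdf → ∀ y : ℝ,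
      pr P (typeDF D0 D1) {ω | Y11 ω ≤ y}
        = (pr P {ω | Z ω = 0} {ω | Y ω ≤ y ∧ D ω = 1}
            - pa * pr P (typeA D0 D1) {ω | Y11 ω ≤ y}) / pdf
      ∧ pr P (typeDF D0 D1) {ω | Y00 ω ≤ y}
        = (pr P {ω | Z ω = 1} {ω | Y ω ≤ y ∧ D ω = 0}
            - pn * pr P (typeN D0 D1) {ω | Y00 ω ≤ y}) / pdf) := by
  have hmA : MeasurableSet (typeA D0 D1) :=
    (hD0m (measurableSet_singleton 1)).inter (hD1m (measurableSet_singleton 1))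
  have hmN : MeasurableSet (typeN D0 D1) :=
    (hD0m (measurableSet_singleton 0)).inter (hD1m (measurableSet_singleton 0))
  have hmC : MeasurableSet (typeC D0 D1) :=
    (hD0m (measurableSet_singleton 0)).inter (hD1m (measurableSet_singleton 1))
  have hmDF : MeasurableSet (typeDF D0 D1) :=
    (hD0m (measurableSet_singleton 1)).inter (hD1m (measurableSet_singleton 0))
  have hm1 : ∀ y, MeasurableSet {ω | Y11 ω ≤ y} := fun y => hY11m measurableSet_Iic
  have hm0 : ∀ y, MeasurableSet {ω | Y00 ω ≤ y} := fun y => hY00m measurableSet_Iic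
  have hz1 : P {ω | Z ω = 1} ≠ 0 := hZpos.ne'
  have hz0 : P {ω | Z ω = 0} ≠ 0 := by
    intro h
    have hc : {ω | Z ω = 1}ᶜ = {ω | Z ω = 0} := by
      ext ω
      rcases hZb ω with h | h <;> simp [h]
    have hm : MeasurableSet {ω | Z ω = 1} := hZm (measurableSet_singleton 1)
    rw [← hc, prob_compl_eq_zero_iff hm] at h
    exact hZlt.ne h
  have split : ∀ {S T U : Set Ω}, MeasurableSet U → (∀ ω, ω ∈ T → ω ∉ U) →
      (S =ᵐ[P] (T ∪ U : Set Ω)) → P.real S = P.real T + P.real U := by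
    intro S T U hU hd hS
    rw [measureReal_congr hS, measureReal_union (Set.disjoint_left.2 hd) hU]
  have e11 : ∀ y, pr P {ω | Z ω = 1} {ω | Y ω ≤ y ∧ D ω = 1}
      = P.real (typeA D0 D1 ∩ {ω | Y11 ω ≤ y}) + P.real (typeC D0 D1 ∩ {ω | Y11 ω ≤ y}) := by
    intro y
    rw [pr_of_indep P _ Z hZm RA 1 hz1
      ({x | x.1 ≤ y} ∩ {x | x.2.2.2.2.2 = 1})
      ((measurableSet_le (by fun_prop) (by fun_prop)).inter
        (measurableSet_eq_fun (by fun_prop) (by fun_prop))) _ ?_]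
    · refine split (hmC.inter (hm1 y)) ?_ ?_
      · rintro ω ⟨⟨h, -⟩, -⟩ ⟨⟨h', -⟩, -⟩
        linarith
      · refine Filter.Eventually.set_eq ?_
        filter_upwards with ω
        rcases hD0b ω with h | h <;> simp [typeA, typeC, h, and_comm]
    · intro ω hω
      rcases hD1b ω with h | h <;> simp [hYdef, hDdef, hω, h]
  have e01 : ∀ y, pr P {ω | Z ω = 0} {ω | Y ω ≤ y ∧ D ω = 1}
      = P.real (typeA D0 D1 ∩ {ω | Y11 ω ≤ y}) + P.real (typeDF D0 D1 ∩ {ω | Y11 ω ≤ y}) := by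
    intro y
    rw [pr_of_indep P _ Z hZm RA 0 hz0
      ({x | x.2.1 ≤ y} ∩ {x | x.2.2.2.2.1 = 1})
      ((measurableSet_le (by fun_prop) (by fun_prop)).inter
        (measurableSet_eq_fun (by fun_prop) (by fun_prop))) _ ?_]
    · refine split (hmDF.inter (hm1 y)) ?_ ?_
      · rintro ω ⟨⟨-, h⟩, -⟩ ⟨⟨-, h'⟩, -⟩
        linarith
      · refine Filter.Eventually.set_eq ?_
        filter_upwards [ER1] with ω hE
        rcases hD1b ω with h | h <;> simp [typeA, typeDF, h, hE, and_comm]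
    · intro ω hω
      rcases hD0b ω with h | h <;> simp [hYdef, hDdef, hω, h]
  have e00 : ∀ y, pr P {ω | Z ω = 0} {ω | Y ω ≤ y ∧ D ω = 0}
      = P.real (typeN D0 D1 ∩ {ω | Y00 ω ≤ y}) + P.real (typeC D0 D1 ∩ {ω | Y00 ω ≤ y}) := by
    intro y
    rw [pr_of_indep P _ Z hZm RA 0 hz0
      ({x | x.2.2.2.1 ≤ y} ∩ {x | x.2.2.2.2.1 = 0})
      ((measurableSet_le (by fun_prop) (by fun_prop)).inter
        (measurableSet_eq_fun (by fun_prop) (by fun_prop))) _ ?_]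
    · refine split (hmC.inter (hm0 y)) ?_ ?_
      · rintro ω ⟨⟨-, h⟩, -⟩ ⟨⟨-, h'⟩, -⟩
        linarith
      · refine Filter.Eventually.set_eq ?_
        filter_upwards with ω
        rcases hD1b ω with h | h <;> simp [typeN, typeC, h, and_comm]
    · intro ω hω
      rcases hD0b ω with h | h <;> simp [hYdef, hDdef, hω, h]
  have e10 : ∀ y, pr P {ω | Z ω = 1} {ω | Y ω ≤ y ∧ D ω = 0}
      = P.real (typeN D0 D1 ∩ {ω | Y00 ω ≤ y}) + P.real (typeDF D0 D1 ∩ {ω | Y00 ω ≤ y}) := by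
    intro y
    rw [pr_of_indep P _ Z hZm RA 1 hz1
      ({x | x.2.2.1 ≤ y} ∩ {x | x.2.2.2.2.2 = 0})
      ((measurableSet_le (by fun_prop) (by fun_prop)).inter
        (measurableSet_eq_fun (by fun_prop) (by fun_prop))) _ ?_]
    · refine split (hmDF.inter (hm0 y)) ?_ ?_
      · rintro ω ⟨⟨h, -⟩, -⟩ ⟨⟨h', -⟩, -⟩
        linarith
      · refine Filter.Eventually.set_eq ?_
        filter_upwards [ER0] with ω hE
        rcases hD0b ω with h | h <;> simp [typeN, typeDF, h, hE, and_comm]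
    · intro ω hω
      rcases hD1b ω with h | h <;> simp [hYdef, hDdef, hω, h]
  have le : ∀ (t s : Set Ω) (p : ℝ), p = (P t).toReal → P.real (t ∩ s) ≤ p := by
    intro t s p hp
    rw [hp]
    exact measureReal_mono Set.inter_subset_left
  refine ⟨fun ha y => ?_, fun hn y => ?_, fun ha hn hc y => ⟨?_, ?_⟩,
    fun ha hn hd y => ⟨?_, ?_⟩⟩
  · rw [e11, e01, pr_mul P _ _ hmA pa hpa ha]
    exact bounds_aux _ _ _ _ _ _ ha measureReal_nonneg (le _ _ _ hpc) measureReal_nonneg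
      (le _ _ _ hpdf) measureReal_nonneg (le _ _ _ hpa)
  · rw [e00, e10, pr_mul P _ _ hmN pn hpn hn]
    exact bounds_aux _ _ _ _ _ _ hn measureReal_nonneg (le _ _ _ hpc) measureReal_nonneg
      (le _ _ _ hpdf) measureReal_nonneg (le _ _ _ hpn)
  · rw [e11, pr_mul P _ _ hmA pa hpa ha, pr_mul P _ _ hmC pc hpc hc, mul_div_cancel₀ _ ha.ne',
      add_sub_cancel_left]
  · rw [e00, pr_mul P _ _ hmN pn hpn hn, pr_mul P _ _ hmC pc hpc hc, mul_div_cancel₀ _ hn.ne',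
      add_sub_cancel_left]
  · rw [e01, pr_mul P _ _ hmA pa hpa ha, pr_mul P _ _ hmDF pdf hpdf hd, mul_div_cancel₀ _ ha.ne',
      add_sub_cancel_left]
  · rw [e10, pr_mul P _ _ hmN pn hpn hn, pr_mul P _ _ hmDF pdf hpdf hd, mul_div_cancel₀ _ hn.ne',
      add_sub_cancel_left]
end

section
/- Assume RA and ER, Y₁ and Y₀ integrable, p_a > 0, p_n > 0, P(D=1 | Z=1) − p_a > 0, P(D=1 | Z=0) − p_a > 0, P(D=0 | Z=0) − p_n > 0, and P(D=0 | Z=1) − p_n > 0. Then: E[Y₁ | T=c] = (E[Y·D | Z=1] − p_a·E[Y₁ | T=a]) / (P(D=1 | Z=1) − p_a); E[Y₁ | T=df] = (E[Y·D | Z=0] − p_a·E[Y₁ | T=a]) / (P(D=1 | Z=0) − p_a); E[Y₀ | T=c] = (E[Y·(1−D) | Z=0] − p_n·E[Y₀ | T=n]) / (P(D=0 | Z=0) − p_n); and E[Y₀ | T=df] = (E[Y·(1−D) | Z=1] − p_n·E[Y₀ | T=n]) / (P(D=0 | Z=1) − p_n). Moreover P(D=1 | Z=1) − p_a = p_c and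 P(D=1 | Z=0) − p_a = p_df, so that E[Y₁ − Y₀ | T=c] = E[Y₁ | T=c] − E[Y₀ | T=c] and E[Y₁ − Y₀ | T=df] = E[Y₁ | T=df] − E[Y₀ | T=df]. -/
open MeasureTheory ProbabilityTheory

lemma ce_mul_prob {Ω : Type*} [MeasurableSpace Ω] (P : Measure Ω) [IsProbabilityMeasure P]
    {t : Set Ω} (ht : MeasurableSet t) (f : Ω → ℝ) :
    (P t).toReal * ce P t f = ∫ ω, t.indicator f ω ∂P := by
  rw [integral_indicator ht]
  unfold ce ProbabilityTheory.cond
  rw [integral_smul_measure, smul_eq_mul, ENNReal.toReal_inv]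
  by_cases h : P t = 0
  · rw [Measure.restrict_eq_zero.2 h]; simp [h]
  · have : (P t).toReal ≠ 0 := ENNReal.toReal_ne_zero.2 ⟨h, measure_ne_top _ _⟩
    field_simp

lemma ce_indep {Ω : Type*} [MeasurableSpace Ω] (P : Measure Ω) [IsProbabilityMeasure P]
    {Z f h : Ω → ℝ} (hZ : Measurable Z) (hf : Measurable f) (z : ℝ)
    (hz : P {ω | Z ω = z} ≠ 0) (hI : IndepFun f Z P)
    (hh : ∀ᵐ ω ∂P, Z ω = z → h ω = f ω) :
    ce P {ω | Z ω = z} h = ∫ ω, f ω ∂P := by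
  have ht : MeasurableSet {ω | Z ω = z} := hZ (measurableSet_singleton z)
  have h0 : (P {ω | Z ω = z}).toReal ≠ 0 := ENNReal.toReal_ne_zero.2 ⟨hz, measure_ne_top _ _⟩
  have e := ce_mul_prob P ht h
  have hg : Measurable (Set.indicator ({z} : Set ℝ) (fun _ => (1:ℝ))) :=
    measurable_const.indicator (measurableSet_singleton z)
  have e2 : ∫ ω, {ω | Z ω = z}.indicator h ω ∂P
      = ∫ ω, f ω * (Set.indicator ({z} : Set ℝ) (fun _ => (1:ℝ)) (Z ω)) ∂P := by
    apply integral_congr_ae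
    filter_upwards [hh] with ω hω
    by_cases hc : Z ω = z
    · simp [hc, hω hc]
    · simp [hc]
  have e3 : ∫ ω, (Set.indicator ({z} : Set ℝ) (fun _ => (1:ℝ)) (Z ω)) ∂P
      = (P {ω | Z ω = z}).toReal := by
    have : (fun ω => Set.indicator ({z} : Set ℝ) (fun _ => (1:ℝ)) (Z ω))
        = {ω | Z ω = z}.indicator 1 := by
      ext ω
      by_cases hc : Z ω = z <;> simp [hc]
    rw [this, integral_indicator_one ht]; rfl
  have hI2 : IndepFun f (fun ω => Set.indicator ({z} : Set ℝ) (fun _ => (1:ℝ)) (Z ω)) P :=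
    hI.comp measurable_id hg
  rw [e2, hI2.integral_fun_mul_eq_mul_integral hf.aestronglyMeasurable
    (hg.comp hZ).aestronglyMeasurable, e3] at e
  rw [mul_comm] at e
  exact mul_right_cancel₀ h0 e

lemma pr_eq_ce {Ω : Type*} [MeasurableSpace Ω] (P : Measure Ω)
    (t : Set Ω) {s : Set Ω} (hs : MeasurableSet s) : pr P t s = ce P t (s.indicator 1) := by
  unfold pr ce
  rw [integral_indicator_one hs]; rfl

lemma integrable_cond' {Ω : Type*} [MeasurableSpace Ω] (P : Measure Ω)
    (t : Set Ω) (ht : P t ≠ 0) {f : Ω → ℝ} (hf : Integrable f P) : Integrable f (P[|t]) :=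
  hf.restrict.smul_measure (ENNReal.inv_ne_top.2 ht)

lemma integral_split {Ω : Type*} [MeasurableSpace Ω] (P : Measure Ω) [IsProbabilityMeasure P]
    {s t : Set Ω} (hs : MeasurableSet s) (ht : MeasurableSet t) {f g : Ω → ℝ}
    (hg : Integrable g P) (hf : ∀ ω, f ω = s.indicator g ω + t.indicator g ω) :
    ∫ ω, f ω ∂P = (P s).toReal * ce P s g + (P t).toReal * ce P t g := by
  rw [ce_mul_prob P hs, ce_mul_prob P ht, ← integral_add (hg.indicator hs) (hg.indicator ht)]
  exact integral_congr_ae (Filter.Eventually.of_forall hf)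

lemma prob_split {Ω : Type*} [MeasurableSpace Ω] (P : Measure Ω) [IsProbabilityMeasure P]
    {s t : Set Ω} (hs : MeasurableSet s) (ht : MeasurableSet t) {f : Ω → ℝ}
    (hf : ∀ ω, f ω = s.indicator 1 ω + t.indicator 1 ω) :
    ∫ ω, f ω ∂P = (P s).toReal + (P t).toReal := by
  have h1 : Integrable (1 : Ω → ℝ) P := integrable_const 1
  have : ∫ ω, f ω ∂P = ∫ ω, (s.indicator (1 : Ω → ℝ) ω + t.indicator (1 : Ω → ℝ) ω) ∂P :=
    integral_congr_ae (Filter.Eventually.of_forall hf)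
  rw [this, integral_add (h1.indicator hs) (h1.indicator ht), integral_indicator_one hs,
    integral_indicator_one ht]; rfl

theorem mean_potential_outcomes_ra_er
    {Ω : Type*} [MeasurableSpace Ω] (P : Measure Ω) [IsProbabilityMeasure P]
    (Y11 Y10 Y01 Y00 D0 D1 Z D Y : Ω → ℝ)
    (hY11m : Measurable Y11) (hY10m : Measurable Y10)
    (hY01m : Measurable Y01) (hY00m : Measurable Y00)
    (hD0m : Measurable D0) (hD1m : Measurable D1) (hZm : Measurable Z)
    (hD0b : ∀ ω, D0 ω = 0 ∨ D0 ω = 1) (hD1b : ∀ ω, D1 ω = 0 ∨ D1 ω = 1)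
    (hZb : ∀ ω, Z ω = 0 ∨ Z ω = 1)
    (hZpos : 0 < P {ω | Z ω = 1}) (hZlt : P {ω | Z ω = 1} < 1)
    (hDdef : ∀ ω, D ω = D1 ω * Z ω + D0 ω * (1 - Z ω))
    (hYdef : ∀ ω, Y ω = (Y11 ω * Z ω + Y10 ω * (1 - Z ω)) * D ω
        + (Y01 ω * Z ω + Y00 ω * (1 - Z ω)) * (1 - D ω))
    (RA : IndepFun (fun ω => (Y11 ω, Y10 ω, Y01 ω, Y00 ω, D0 ω, D1 ω)) Z P)
    (ER1 : ∀ᵐ ω ∂P, Y11 ω = Y10 ω) (ER0 : ∀ᵐ ω ∂P, Y01 ω = Y00 ω)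
    (hY1int : Integrable Y11 P) (hY0int : Integrable Y00 P)
    (pa pn pc pdf : ℝ)
    (hpa : pa = (P (typeA D0 D1)).toReal) (hpn : pn = (P (typeN D0 D1)).toReal)
    (hpc : pc = (P (typeC D0 D1)).toReal) (hpdf : pdf = (P (typeDF D0 D1)).toReal)
    (hpa0 : 0 < pa) (hpn0 : 0 < pn)
    (h1 : 0 < pr P {ω | Z ω = 1} {ω | D ω = 1} - pa)
    (h2 : 0 < pr P {ω | Z ω = 0} {ω | D ω = 1} - pa)
    (h3 : 0 < pr P {ω | Z ω = 0} {ω | D ω = 0} - pn)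
    (h4 : 0 < pr P {ω | Z ω = 1} {ω | D ω = 0} - pn) :
    ce P (typeC D0 D1) Y11
      = (ce P {ω | Z ω = 1} (fun ω => Y ω * D ω) - pa * ce P (typeA D0 D1) Y11)
        / (pr P {ω | Z ω = 1} {ω | D ω = 1} - pa)
  ∧ ce P (typeDF D0 D1) Y11
      = (ce P {ω | Z ω = 0} (fun ω => Y ω * D ω) - pa * ce P (typeA D0 D1) Y11)
        / (pr P {ω | Z ω = 0} {ω | D ω = 1} - pa)
  ∧ ce P (typeC D0 D1) Y00
      = (ce P {ω | Z ω = 0} (fun ω => Y ω * (1 - D ω)) - pn * ce P (typeN D0 D1) Y00)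
        / (pr P {ω | Z ω = 0} {ω | D ω = 0} - pn)
  ∧ ce P (typeDF D0 D1) Y00
      = (ce P {ω | Z ω = 1} (fun ω => Y ω * (1 - D ω)) - pn * ce P (typeN D0 D1) Y00)
        / (pr P {ω | Z ω = 1} {ω | D ω = 0} - pn)
  ∧ pr P {ω | Z ω = 1} {ω | D ω = 1} - pa = pc
  ∧ pr P {ω | Z ω = 0} {ω | D ω = 1} - pa = pdf
  ∧ ce P (typeC D0 D1) (fun ω => Y11 ω - Y00 ω)
      = ce P (typeC D0 D1) Y11 - ce P (typeC D0 D1) Y00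
  ∧ ce P (typeDF D0 D1) (fun ω => Y11 ω - Y00 ω)
      = ce P (typeDF D0 D1) Y11 - ce P (typeDF D0 D1) Y00 := by
  have m0 : ∀ z : ℝ, MeasurableSet {ω | D0 ω = z} := fun z => hD0m (measurableSet_singleton z)
  have m1 : ∀ z : ℝ, MeasurableSet {ω | D1 ω = z} := fun z => hD1m (measurableSet_singleton z)
  have hA : MeasurableSet (typeA D0 D1) := (m0 1).inter (m1 1)
  have hN : MeasurableSet (typeN D0 D1) := (m0 0).inter (m1 0)
  have hC : MeasurableSet (typeC D0 D1) := (m0 0).inter (m1 1)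
  have hF : MeasurableSet (typeDF D0 D1) := (m0 1).inter (m1 0)
  have hDm : Measurable D := by
    have : D = fun ω => D1 ω * Z ω + D0 ω * (1 - Z ω) := funext hDdef
    rw [this]; fun_prop
  have mD : ∀ z : ℝ, MeasurableSet {ω | D ω = z} := fun z => hDm (measurableSet_singleton z)
  have z1 : P {ω | Z ω = 1} ≠ 0 := hZpos.ne'
  have z0 : P {ω | Z ω = 0} ≠ 0 := by
    intro h
    have hc : {ω | Z ω = 1} = {ω | Z ω = 0}ᶜ := by
      ext ω
      rcases hZb ω with h | h <;> simp [h]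
    have : P {ω | Z ω = 1} = 1 := by
      rw [hc]
      exact (prob_compl_eq_one_iff (hZm (measurableSet_singleton 0))).2 h
    exact hZlt.ne this
  have p11 : pr P {ω | Z ω = 1} {ω | D ω = 1} = pa + pc := by
    rw [pr_eq_ce P _ (mD 1), ce_indep P hZm (f := D1) hD1m 1 z1, hpa, hpc]
    · apply prob_split P hA hC
      intro ω
      rcases hD0b ω with h | h <;> rcases hD1b ω with h' | h' <;>
        simp [typeA, typeC, Set.indicator, h, h']
    · exact RA.comp (φ := fun x : ℝ × ℝ × ℝ × ℝ × ℝ × ℝ => x.2.2.2.2.2) (by fun_prop) measurable_id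
    · refine Filter.Eventually.of_forall fun ω hz => ?_
      rcases hD1b ω with h' | h' <;> simp [Set.indicator, hDdef, hz, h']
  have p10 : pr P {ω | Z ω = 0} {ω | D ω = 1} = pa + pdf := by
    rw [pr_eq_ce P _ (mD 1), ce_indep P hZm (f := D0) hD0m 0 z0, hpa, hpdf]
    · apply prob_split P hA hF
      intro ω
      rcases hD0b ω with h | h <;> rcases hD1b ω with h' | h' <;>
        simp [typeA, typeDF, Set.indicator, h, h']
    · exact RA.comp (φ := fun x : ℝ × ℝ × ℝ × ℝ × ℝ × ℝ => x.2.2.2.2.1) (by fun_prop) measurable_id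
    · refine Filter.Eventually.of_forall fun ω hz => ?_
      rcases hD0b ω with h' | h' <;> simp [Set.indicator, hDdef, hz, h']
  have p00 : pr P {ω | Z ω = 0} {ω | D ω = 0} = pn + pc := by
    rw [pr_eq_ce P _ (mD 0), ce_indep P hZm (f := fun ω => 1 - D0 ω) (by fun_prop) 0 z0, hpn, hpc]
    · apply prob_split P hN hC
      intro ω
      rcases hD0b ω with h | h <;> rcases hD1b ω with h' | h' <;>
        simp [typeN, typeC, Set.indicator, h, h']
    · exact RA.comp (φ := fun x : ℝ × ℝ × ℝ × ℝ × ℝ × ℝ => 1 - x.2.2.2.2.1) (by fun_prop)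
        measurable_id
    · refine Filter.Eventually.of_forall fun ω hz => ?_
      rcases hD0b ω with h' | h' <;> simp [Set.indicator, hDdef, hz, h']
  have p01 : pr P {ω | Z ω = 1} {ω | D ω = 0} = pn + pdf := by
    rw [pr_eq_ce P _ (mD 0), ce_indep P hZm (f := fun ω => 1 - D1 ω) (by fun_prop) 1 z1, hpn, hpdf]
    · apply prob_split P hN hF
      intro ω
      rcases hD0b ω with h | h <;> rcases hD1b ω with h' | h' <;>
        simp [typeN, typeDF, Set.indicator, h, h']
    · exact RA.comp (φ := fun x : ℝ × ℝ × ℝ × ℝ × ℝ × ℝ => 1 - x.2.2.2.2.2) (by fun_prop)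
        measurable_id
    · refine Filter.Eventually.of_forall fun ω hz => ?_
      rcases hD1b ω with h' | h' <;> simp [Set.indicator, hDdef, hz, h']
  have e11 : ce P {ω | Z ω = 1} (fun ω => Y ω * D ω)
      = pa * ce P (typeA D0 D1) Y11 + pc * ce P (typeC D0 D1) Y11 := by
    rw [ce_indep P hZm (f := fun ω => Y11 ω * D1 ω) (by fun_prop) 1 z1, hpa, hpc]
    · apply integral_split P hA hC hY1int
      intro ω
      rcases hD0b ω with h | h <;> rcases hD1b ω with h' | h' <;>
        simp [typeA, typeC, Set.indicator, h, h']
    · exact RA.comp (φ := fun x : ℝ × ℝ × ℝ × ℝ × ℝ × ℝ => x.1 * x.2.2.2.2.2) (by fun_prop)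
        measurable_id
    · refine Filter.Eventually.of_forall fun ω hz => ?_
      rcases hD1b ω with h' | h' <;> simp [hYdef, hDdef, hz, h']
  have e10 : ce P {ω | Z ω = 0} (fun ω => Y ω * D ω)
      = pa * ce P (typeA D0 D1) Y11 + pdf * ce P (typeDF D0 D1) Y11 := by
    rw [ce_indep P hZm (f := fun ω => Y11 ω * D0 ω) (by fun_prop) 0 z0, hpa, hpdf]
    · apply integral_split P hA hF hY1int
      intro ω
      rcases hD0b ω with h | h <;> rcases hD1b ω with h' | h' <;>
        simp [typeA, typeDF, Set.indicator, h, h']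
    · exact RA.comp (φ := fun x : ℝ × ℝ × ℝ × ℝ × ℝ × ℝ => x.1 * x.2.2.2.2.1) (by fun_prop)
        measurable_id
    · filter_upwards [ER1] with ω he hz
      rcases hD0b ω with h' | h' <;> simp [hYdef, hDdef, hz, h', he]
  have e00 : ce P {ω | Z ω = 0} (fun ω => Y ω * (1 - D ω))
      = pn * ce P (typeN D0 D1) Y00 + pc * ce P (typeC D0 D1) Y00 := by
    rw [ce_indep P hZm (f := fun ω => Y00 ω * (1 - D0 ω)) (by fun_prop) 0 z0, hpn, hpc]
    · apply integral_split P hN hC hY0int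
      intro ω
      rcases hD0b ω with h | h <;> rcases hD1b ω with h' | h' <;>
        simp [typeN, typeC, Set.indicator, h, h']
    · exact RA.comp (φ := fun x : ℝ × ℝ × ℝ × ℝ × ℝ × ℝ => x.2.2.2.1 * (1 - x.2.2.2.2.1))
        (by fun_prop) measurable_id
    · refine Filter.Eventually.of_forall fun ω hz => ?_
      rcases hD0b ω with h' | h' <;> simp [hYdef, hDdef, hz, h']
  have e01 : ce P {ω | Z ω = 1} (fun ω => Y ω * (1 - D ω))
      = pn * ce P (typeN D0 D1) Y00 + pdf * ce P (typeDF D0 D1) Y00 := by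
    rw [ce_indep P hZm (f := fun ω => Y00 ω * (1 - D1 ω)) (by fun_prop) 1 z1, hpn, hpdf]
    · apply integral_split P hN hF hY0int
      intro ω
      rcases hD0b ω with h | h <;> rcases hD1b ω with h' | h' <;>
        simp [typeN, typeDF, Set.indicator, h, h']
    · exact RA.comp (φ := fun x : ℝ × ℝ × ℝ × ℝ × ℝ × ℝ => x.2.2.2.1 * (1 - x.2.2.2.2.2))
        (by fun_prop) measurable_id
    · filter_upwards [ER0] with ω he hz
      rcases hD1b ω with h' | h' <;> simp [hYdef, hDdef, hz, h', he]
  rw [p11, add_sub_cancel_left] at h1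
  rw [p10, add_sub_cancel_left] at h2
  have c0 : P (typeC D0 D1) ≠ 0 := by
    intro h; rw [h] at hpc; simp at hpc; linarith
  have f0 : P (typeDF D0 D1) ≠ 0 := by
    intro h; rw [h] at hpdf; simp at hpdf; linarith
  simp only [p11, p10, p00, p01, e11, e10, e00, e01, add_sub_cancel_left]
  refine ⟨?_, ?_, ?_, ?_, trivial, trivial, ?_, ?_⟩
  · rw [mul_div_cancel_left₀ _ h1.ne']
  · rw [mul_div_cancel_left₀ _ h2.ne']
  · rw [mul_div_cancel_left₀ _ h1.ne']
  · rw [mul_div_cancel_left₀ _ h2.ne']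
  · exact integral_sub (integrable_cond' P _ c0 hY1int) (integrable_cond' P _ c0 hY0int)
  · exact integral_sub (integrable_cond' P _ f0 hY1int) (integrable_cond' P _ f0 hY0int)
end

section
/- Assume RA and ER, and suppose there exist reals y_lo ≤ y_hi such that y_lo ≤ Y₁ ≤ y_hi and y_lo ≤ Y₀ ≤ y_hi almost surely. Then for all z, z' ∈ {0,1}: E[Y·D + (1−D)·y_lo | Z=z] ≤ E[Y·D + (1−D)·y_hi | Z=z'], and E[Y·(1−D) + D·y_lo | Z=z] ≤ E[Y·(1−D) + D·y_hi | Z=z']. -/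
open MeasureTheory ProbabilityTheory

theorem ce_of_indep {Ω : Type*} [MeasurableSpace Ω] (P : Measure Ω) [IsProbabilityMeasure P]
    (f Z : Ω → ℝ) (hf : Measurable f) (hZ : Measurable Z) (h : IndepFun f Z P) (z : ℝ)
    (hz : P {ω | Z ω = z} ≠ 0) : ce P {ω | Z ω = z} f = ∫ ω, f ω ∂P := by
  have hs : MeasurableSet {ω | Z ω = z} := hZ (measurableSet_singleton z)
  have hmap : (P[|{ω | Z ω = z}]).map f = P.map f := by
    ext t ht
    rw [Measure.map_apply hf ht, Measure.map_apply hf ht, cond_apply hs]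
    have h2 := h.measure_inter_preimage_eq_mul t {z} ht (measurableSet_singleton z)
    have e : Z ⁻¹' {z} = {ω | Z ω = z} := rfl
    rw [e] at h2
    rw [Set.inter_comm, h2, mul_comm (P (f ⁻¹' t)), ← mul_assoc,
      ENNReal.inv_mul_cancel hz (measure_ne_top _ _), one_mul]
  have a1 := integral_map (μ := P[|{ω | Z ω = z}]) hf.aemeasurable
    (f := fun x : ℝ => x) measurable_id.aestronglyMeasurable
  have a2 := integral_map (μ := P) hf.aemeasurable
    (f := fun x : ℝ => x) measurable_id.aestronglyMeasurable
  unfold ce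
  rw [← a1, ← a2, hmap]

theorem ce_mono_bdd {Ω : Type*} [MeasurableSpace Ω] (P : Measure Ω) [IsProbabilityMeasure P]
    (f g : Ω → ℝ) (hf : Measurable f) (hg : Measurable g) (s : Set Ω) (hs : P s ≠ 0) (a b : ℝ)
    (h : ∀ᵐ ω ∂P, a ≤ f ω ∧ f ω ≤ g ω ∧ g ω ≤ b) : ce P s f ≤ ce P s g := by
  haveI : IsProbabilityMeasure (P[|s]) := cond_isProbabilityMeasure hs
  have h' : ∀ᵐ ω ∂(P[|s]), a ≤ f ω ∧ f ω ≤ g ω ∧ g ω ≤ b :=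
    cond_absolutelyContinuous.ae_le h
  unfold ce
  refine integral_mono_ae (Integrable.of_mem_Icc a b hf.aemeasurable ?_)
    (Integrable.of_mem_Icc a b hg.aemeasurable ?_) ?_
  · filter_upwards [h'] with ω hω using ⟨hω.1, hω.2.1.trans hω.2.2⟩
  · filter_upwards [h'] with ω hω using ⟨hω.1.trans hω.2.1, hω.2.2⟩
  · filter_upwards [h'] with ω hω using hω.2.1

theorem manski_mean_independence_implications
    {Ω : Type*} [MeasurableSpace Ω] (P : Measure Ω) [IsProbabilityMeasure P]
    (Y11 Y10 Y01 Y00 D0 D1 Z D Y : Ω → ℝ)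
    (hY11m : Measurable Y11) (hY10m : Measurable Y10)
    (hY01m : Measurable Y01) (hY00m : Measurable Y00)
    (hD0m : Measurable D0) (hD1m : Measurable D1) (hZm : Measurable Z)
    (hD0b : ∀ ω, D0 ω = 0 ∨ D0 ω = 1) (hD1b : ∀ ω, D1 ω = 0 ∨ D1 ω = 1)
    (hZb : ∀ ω, Z ω = 0 ∨ Z ω = 1)
    (hZpos : 0 < P {ω | Z ω = 1}) (hZlt : P {ω | Z ω = 1} < 1)
    (hDdef : ∀ ω, D ω = D1 ω * Z ω + D0 ω * (1 - Z ω))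
    (hYdef : ∀ ω, Y ω = (Y11 ω * Z ω + Y10 ω * (1 - Z ω)) * D ω
        + (Y01 ω * Z ω + Y00 ω * (1 - Z ω)) * (1 - D ω))
    (RA : IndepFun (fun ω => (Y11 ω, Y10 ω, Y01 ω, Y00 ω, D0 ω, D1 ω)) Z P)
    (ER1 : ∀ᵐ ω ∂P, Y11 ω = Y10 ω) (ER0 : ∀ᵐ ω ∂P, Y01 ω = Y00 ω)
    (ylo yhi : ℝ) (hle : ylo ≤ yhi)
    (hY1bdd : ∀ᵐ ω ∂P, ylo ≤ Y11 ω ∧ Y11 ω ≤ yhi)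
    (hY0bdd : ∀ᵐ ω ∂P, ylo ≤ Y00 ω ∧ Y00 ω ≤ yhi) :
    ∀ z z' : ℝ, z = 0 ∨ z = 1 → z' = 0 ∨ z' = 1 →
      ce P {ω | Z ω = z} (fun ω => Y ω * D ω + (1 - D ω) * ylo)
        ≤ ce P {ω | Z ω = z'} (fun ω => Y ω * D ω + (1 - D ω) * yhi)
      ∧ ce P {ω | Z ω = z} (fun ω => Y ω * (1 - D ω) + D ω * ylo)
        ≤ ce P {ω | Z ω = z'} (fun ω => Y ω * (1 - D ω) + D ω * yhi) := by
  have hDm : Measurable D := by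
    rw [show D = _ from funext hDdef]; fun_prop
  have hYm : Measurable Y := by
    rw [show Y = _ from funext hYdef]; fun_prop
  have hne : ∀ z : ℝ, z = 0 ∨ z = 1 → P {ω | Z ω = z} ≠ 0 := by
    rintro z (rfl | rfl)
    · intro h0
      have hc : {ω | Z ω = 1}ᶜ = {ω | Z ω = 0} := by
        ext ω
        rcases hZb ω with h | h <;> simp [h]
      have hm : MeasurableSet {ω | Z ω = 1} := hZm (measurableSet_singleton 1)
      rw [← hc, prob_compl_eq_zero_iff hm] at h0
      exact hZlt.ne h0
    · exact hZpos.ne'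
  have i1 : IndepFun Y11 Z P :=
    RA.comp (φ := fun p : ℝ × ℝ × ℝ × ℝ × ℝ × ℝ => p.1) (ψ := id) (by fun_prop) measurable_id
  have i0 : IndepFun Y00 Z P :=
    RA.comp (φ := fun p : ℝ × ℝ × ℝ × ℝ × ℝ × ℝ => p.2.2.2.1) (ψ := id)
      (by fun_prop) measurable_id
  have hcase : ∀ᵐ ω ∂P, (ylo ≤ Y11 ω ∧ Y11 ω ≤ yhi) ∧ (ylo ≤ Y00 ω ∧ Y00 ω ≤ yhi) ∧
      ((D ω = 1 ∧ Y ω = Y11 ω) ∨ (D ω = 0 ∧ Y ω = Y00 ω)) := by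
    filter_upwards [ER1, ER0, hY1bdd, hY0bdd] with ω e1 e0 b1 b0
    refine ⟨b1, b0, ?_⟩
    have hd := hDdef ω
    have hy := hYdef ω
    have hDb : D ω = 0 ∨ D ω = 1 := by
      rcases hZb ω with h | h <;> rw [h] at hd <;> simp only [mul_zero, mul_one, sub_self,
        sub_zero, zero_add, add_zero] at hd <;> rw [hd]
      · exact hD0b ω
      · exact hD1b ω
    rcases hDb with h | h
    · right
      refine ⟨h, ?_⟩
      rw [hy, h, e0]; ring
    · left
      refine ⟨h, ?_⟩
      rw [hy, h, e1]; ring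
  intro z z' hz hz'
  have nz := hne z hz
  have nz' := hne z' hz'
  constructor
  · calc _ ≤ ce P {ω | Z ω = z} Y11 := by
          refine ce_mono_bdd P _ _ (by fun_prop) hY11m _ nz ylo yhi ?_
          filter_upwards [hcase] with ω ⟨b1, b0, h⟩
          rcases h with ⟨h, e⟩ | ⟨h, e⟩ <;> rw [h, e] <;> refine ⟨?_, ?_, ?_⟩ <;> linarith
      _ = ce P {ω | Z ω = z'} Y11 := by
          rw [ce_of_indep P _ Z hY11m hZm i1 z nz, ce_of_indep P _ Z hY11m hZm i1 z' nz']
      _ ≤ _ := by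
          refine ce_mono_bdd P _ _ hY11m (by fun_prop) _ nz' ylo yhi ?_
          filter_upwards [hcase] with ω ⟨b1, b0, h⟩
          rcases h with ⟨h, e⟩ | ⟨h, e⟩ <;> rw [h, e] <;> refine ⟨?_, ?_, ?_⟩ <;> linarith
  · calc _ ≤ ce P {ω | Z ω = z} Y00 := by
          refine ce_mono_bdd P _ _ (by fun_prop) hY00m _ nz ylo yhi ?_
          filter_upwards [hcase] with ω ⟨b1, b0, h⟩
          rcases h with ⟨h, e⟩ | ⟨h, e⟩ <;> rw [h, e] <;> refine ⟨?_, ?_, ?_⟩ <;> linarith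
      _ = ce P {ω | Z ω = z'} Y00 := by
          rw [ce_of_indep P _ Z hY00m hZm i0 z nz, ce_of_indep P _ Z hY00m hZm i0 z' nz']
      _ ≤ _ := by
          refine ce_mono_bdd P _ _ hY00m (by fun_prop) _ nz' ylo yhi ?_
          filter_upwards [hcase] with ω ⟨b1, b0, h⟩
          rcases h with ⟨h, e⟩ | ⟨h, e⟩ <;> rw [h, e] <;> refine ⟨?_, ?_, ?_⟩ <;> linarith
end

section
/- Assume RA and MON (D₁ ≥ D₀ almost surely), and P(D=1 | Z=1) > P(D=1 | Z=0). Then p_df = 0, p_c = P(D=1 | Z=1) − P(D=1 | Z=0) > 0, p_a = P(D=1 | Z=0), p_n = P(D=0 | Z=1). Moreover: (i) if p_a > 0, then for every y ∈ ℝ, max{ (P(Y≤y, D=1 | Z=1) − p_c)/p_a, 0 } ≤ P(Y₁₁≤y | T=a) ≤ min{ P(Y≤y, D=1 | Z=1)/p_a, 1 }, P(Y₁₀≤y | T=a) = P(Y≤y | D=1, Z=0), and P(Y₁₁≤y | T=c) = (P(Y≤y, D=1 | Z=1) − p_a·P(Y₁₁≤y | T=a))/p_c; (ii) if p_n > 0,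 then for every y ∈ ℝ, max{ (P(Y≤y, D=0 | Z=0) − p_c)/p_n, 0 } ≤ P(Y₀₀≤y | T=n) ≤ min{ P(Y≤y, D=0 | Z=0)/p_n, 1 }, P(Y₀₁≤y | T=n) = P(Y≤y | D=0, Z=1), and P(Y₀₀≤y | T=c) = (P(Y≤y, D=0 | Z=0) − p_n·P(Y₀₀≤y | T=n))/p_c. -/
open MeasureTheory ProbabilityTheory

theorem pr_eq_aux_s12 {Ω : Type*} [MeasurableSpace Ω] (P : Measure Ω) {t : Set Ω}
    (ht : MeasurableSet t) (s : Set Ω) : pr P t s = P.real (t ∩ s) / P.real t := by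
  unfold pr
  rw [cond_apply ht, ENNReal.toReal_mul, ENNReal.toReal_inv, div_eq_inv_mul]
  rfl

theorem split_aux_s12 {Ω : Type*} [MeasurableSpace Ω] (P : Measure Ω) [IsProbabilityMeasure P]
    {E F G : Set Ω} (hG : MeasurableSet G)
    (h : ∀ᵐ ω ∂P, ω ∈ E ↔ (ω ∈ F ∨ ω ∈ G)) (hd : ∀ ω, ω ∈ F → ω ∈ G → False) :
    P.real E = P.real F + P.real G := by
  rw [← measureReal_union (Set.disjoint_left.2 fun ω a b => hd ω a b) hG]
  apply measureReal_congr
  filter_upwards [h] with ω hω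
  exact propext hω

theorem eqae_aux {Ω : Type*} [MeasurableSpace Ω] (P : Measure Ω)
    {E F : Set Ω} (h : ∀ᵐ ω ∂P, ω ∈ E ↔ ω ∈ F) : P.real E = P.real F := by
  apply measureReal_congr
  filter_upwards [h] with ω hω
  exact propext hω

theorem meas_aux {α : Type*} [MeasurableSpace α] {f g : α → ℝ} {y d : ℝ} (hf : Measurable f)
    (hg : Measurable g) : MeasurableSet {q | f q ≤ y ∧ g q = d} := by
  have h1 : MeasurableSet {q | f q ≤ y} := measurableSet_le hf measurable_const
  have h2 : MeasurableSet {q | g q = d} := measurableSet_eq_fun hg measurable_const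
  exact h1.inter h2

/-- The arithmetic of the bounds. -/
theorem bounds_aux_s12 {q x w p c : ℝ} (hp : 0 < p) (hq : q = x + w) (hx : 0 ≤ x)
    (hxp : x ≤ p) (hw : 0 ≤ w) (hwc : w ≤ c) :
    max ((q - c) / p) 0 ≤ x / p ∧ x / p ≤ min (q / p) 1 ∧ w / c = (q - p * (x / p)) / c := by
  refine ⟨max_le ?_ (by positivity), le_min ?_ ?_, ?_⟩
  · gcongr; linarith
  · gcongr; linarith
  · rw [div_le_one hp]; exact hxp
  · rw [mul_div_cancel₀ _ hp.ne', hq]; ring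

theorem distribution_bounds_ra_mon
    {Ω : Type*} [MeasurableSpace Ω] (P : Measure Ω) [IsProbabilityMeasure P]
    (Y11 Y10 Y01 Y00 D0 D1 Z D Y : Ω → ℝ)
    (hY11m : Measurable Y11) (hY10m : Measurable Y10)
    (hY01m : Measurable Y01) (hY00m : Measurable Y00)
    (hD0m : Measurable D0) (hD1m : Measurable D1) (hZm : Measurable Z)
    (hD0b : ∀ ω, D0 ω = 0 ∨ D0 ω = 1) (hD1b : ∀ ω, D1 ω = 0 ∨ D1 ω = 1)
    (hZb : ∀ ω, Z ω = 0 ∨ Z ω = 1)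
    (hZpos : 0 < P {ω | Z ω = 1}) (hZlt : P {ω | Z ω = 1} < 1)
    (hDdef : ∀ ω, D ω = D1 ω * Z ω + D0 ω * (1 - Z ω))
    (hYdef : ∀ ω, Y ω = (Y11 ω * Z ω + Y10 ω * (1 - Z ω)) * D ω
        + (Y01 ω * Z ω + Y00 ω * (1 - Z ω)) * (1 - D ω))
    (RA : IndepFun (fun ω => (Y11 ω, Y10 ω, Y01 ω, Y00 ω, D0 ω, D1 ω)) Z P)
    (MON : ∀ᵐ ω ∂P, D0 ω ≤ D1 ω)
    (hfs : pr P {ω | Z ω = 1} {ω | D ω = 1} > pr P {ω | Z ω = 0} {ω | D ω = 1})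
    (pa pn pc pdf : ℝ)
    (hpa : pa = (P (typeA D0 D1)).toReal) (hpn : pn = (P (typeN D0 D1)).toReal)
    (hpc : pc = (P (typeC D0 D1)).toReal) (hpdf : pdf = (P (typeDF D0 D1)).toReal) :
    pdf = 0
  ∧ pc = pr P {ω | Z ω = 1} {ω | D ω = 1} - pr P {ω | Z ω = 0} {ω | D ω = 1}
  ∧ 0 < pc
  ∧ pa = pr P {ω | Z ω = 0} {ω | D ω = 1}
  ∧ pn = pr P {ω | Z ω = 1} {ω | D ω = 0}
  ∧ (0 < pa → ∀ y : ℝ,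
      max ((pr P {ω | Z ω = 1} {ω | Y ω ≤ y ∧ D ω = 1} - pc) / pa) 0
        ≤ pr P (typeA D0 D1) {ω | Y11 ω ≤ y}
      ∧ pr P (typeA D0 D1) {ω | Y11 ω ≤ y}
        ≤ min (pr P {ω | Z ω = 1} {ω | Y ω ≤ y ∧ D ω = 1} / pa) 1
      ∧ pr P (typeA D0 D1) {ω | Y10 ω ≤ y}
        = pr P {ω | D ω = 1 ∧ Z ω = 0} {ω | Y ω ≤ y}
      ∧ pr P (typeC D0 D1) {ω | Y11 ω ≤ y}
        = (pr P {ω | Z ω = 1} {ω | Y ω ≤ y ∧ D ω = 1}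
            - pa * pr P (typeA D0 D1) {ω | Y11 ω ≤ y}) / pc)
  ∧ (0 < pn → ∀ y : ℝ,
      max ((pr P {ω | Z ω = 0} {ω | Y ω ≤ y ∧ D ω = 0} - pc) / pn) 0
        ≤ pr P (typeN D0 D1) {ω | Y00 ω ≤ y}
      ∧ pr P (typeN D0 D1) {ω | Y00 ω ≤ y}
        ≤ min (pr P {ω | Z ω = 0} {ω | Y ω ≤ y ∧ D ω = 0} / pn) 1
      ∧ pr P (typeN D0 D1) {ω | Y01 ω ≤ y}
        = pr P {ω | D ω = 0 ∧ Z ω = 1} {ω | Y ω ≤ y}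
      ∧ pr P (typeC D0 D1) {ω | Y00 ω ≤ y}
        = (pr P {ω | Z ω = 0} {ω | Y ω ≤ y ∧ D ω = 0}
            - pn * pr P (typeN D0 D1) {ω | Y00 ω ≤ y}) / pc) := by
  have hAm : MeasurableSet (typeA D0 D1) :=
    (measurableSet_eq_fun hD0m measurable_const).inter (measurableSet_eq_fun hD1m measurable_const)
  have hNm : MeasurableSet (typeN D0 D1) :=
    (measurableSet_eq_fun hD0m measurable_const).inter (measurableSet_eq_fun hD1m measurable_const)
  have hCm : MeasurableSet (typeC D0 D1) :=
    (measurableSet_eq_fun hD0m measurable_const).inter (measurableSet_eq_fun hD1m measurable_const)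
  have hDm : Measurable D := by
    rw [show D = _ from funext hDdef]; fun_prop
  have hZs : ∀ z : ℝ, MeasurableSet {ω | Z ω = z} := fun z =>
    measurableSet_eq_fun hZm measurable_const
  have hDs : ∀ z : ℝ, MeasurableSet {ω | D ω = z} := fun z =>
    measurableSet_eq_fun hDm measurable_const
  have hz1 : 0 < P.real {ω | Z ω = 1} := ENNReal.toReal_pos hZpos.ne' (measure_ne_top _ _)
  have hz0 : 0 < P.real {ω | Z ω = 0} := by
    have e : {ω | Z ω = 0} = {ω | Z ω = 1}ᶜ := by
      ext ω
      rcases hZb ω with h | h <;> simp [h]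
    rw [e, probReal_compl_eq_one_sub (hZs 1)]
    have : P.real {ω | Z ω = 1} < 1 := by
      have := (ENNReal.toReal_lt_toReal (measure_ne_top _ _) ENNReal.one_ne_top).2 hZlt
      simpa [Measure.real] using this
    linarith
  -- independence
  have ind : ∀ (Q : Set (ℝ × ℝ × ℝ × ℝ × ℝ × ℝ)) (z : ℝ) (s : Set Ω), MeasurableSet Q →
      (∀ ω, Z ω = z →
        (ω ∈ s ↔ (Y11 ω, Y10 ω, Y01 ω, Y00 ω, D0 ω, D1 ω) ∈ Q)) →
      P.real ({ω | Z ω = z} ∩ s)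
        = P.real {ω | (Y11 ω, Y10 ω, Y01 ω, Y00 ω, D0 ω, D1 ω) ∈ Q} * P.real {ω | Z ω = z} := by
    intro Q z s hQ hs
    have h := RA.measure_inter_preimage_eq_mul Q {z} hQ (measurableSet_singleton z)
    have e : {ω | Z ω = z} ∩ s
        = (fun ω => (Y11 ω, Y10 ω, Y01 ω, Y00 ω, D0 ω, D1 ω)) ⁻¹' Q ∩ Z ⁻¹' {z} := by
      ext ω
      constructor
      · rintro ⟨h1, h2⟩
        exact ⟨(hs ω h1).1 h2, h1⟩
      · rintro ⟨h1, h2⟩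
        exact ⟨h2, (hs ω h2).2 h1⟩
    rw [e]
    simp only [Measure.real]
    rw [h, ENNReal.toReal_mul]
    rfl
  have hval1 : ∀ ω, Z ω = 1 → D ω = D1 ω := fun ω h => by rw [hDdef, h]; ring
  have hval0 : ∀ ω, Z ω = 0 → D ω = D0 ω := fun ω h => by rw [hDdef, h]; ring
  have hY1 : ∀ ω, Z ω = 1 → D ω = 1 → Y ω = Y11 ω := fun ω h h' => by rw [hYdef, h, h']; ring
  have hY2 : ∀ ω, Z ω = 0 → D ω = 1 → Y ω = Y10 ω := fun ω h h' => by rw [hYdef, h, h']; ring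
  have hY3 : ∀ ω, Z ω = 1 → D ω = 0 → Y ω = Y01 ω := fun ω h h' => by rw [hYdef, h, h']; ring
  have hY4 : ∀ ω, Z ω = 0 → D ω = 0 → Y ω = Y00 ω := fun ω h h' => by rw [hYdef, h, h']; ring
  -- joint masses
  have j1 : ∀ d : ℝ, P.real ({ω | Z ω = 1} ∩ {ω | D ω = d})
      = P.real {ω | D1 ω = d} * P.real {ω | Z ω = 1} := fun d =>
    ind {q | q.2.2.2.2.2 = d} 1 _ (measurableSet_eq_fun (by fun_prop) measurable_const)
      (fun ω h => by simp [hval1 ω h])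
  have j0 : ∀ d : ℝ, P.real ({ω | Z ω = 0} ∩ {ω | D ω = d})
      = P.real {ω | D0 ω = d} * P.real {ω | Z ω = 0} := fun d =>
    ind {q | q.2.2.2.2.1 = d} 0 _ (measurableSet_eq_fun (by fun_prop) measurable_const)
      (fun ω h => by simp [hval0 ω h])
  have k11 : ∀ y : ℝ, P.real ({ω | Z ω = 1} ∩ {ω | Y ω ≤ y ∧ D ω = 1})
      = P.real {ω | Y11 ω ≤ y ∧ D1 ω = 1} * P.real {ω | Z ω = 1} := fun y =>
    ind {q | q.1 ≤ y ∧ q.2.2.2.2.2 = 1} 1 _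
      (meas_aux (by fun_prop) (by fun_prop))
      (fun ω h => by
        have hv := hval1 ω h
        have := hY1 ω h
        simp only [Set.mem_ofPred_eq]
        clear * - this hv
        grind)
  have k10 : ∀ y : ℝ, P.real ({ω | Z ω = 0} ∩ {ω | Y ω ≤ y ∧ D ω = 1})
      = P.real {ω | Y10 ω ≤ y ∧ D0 ω = 1} * P.real {ω | Z ω = 0} := fun y =>
    ind {q | q.2.1 ≤ y ∧ q.2.2.2.2.1 = 1} 0 _
      (meas_aux (by fun_prop) (by fun_prop))
      (fun ω h => by
        have hv := hval0 ω h
        have := hY2 ω h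
        simp only [Set.mem_ofPred_eq]
        clear * - this hv
        grind)
  have k01 : ∀ y : ℝ, P.real ({ω | Z ω = 1} ∩ {ω | Y ω ≤ y ∧ D ω = 0})
      = P.real {ω | Y01 ω ≤ y ∧ D1 ω = 0} * P.real {ω | Z ω = 1} := fun y =>
    ind {q | q.2.2.1 ≤ y ∧ q.2.2.2.2.2 = 0} 1 _
      (meas_aux (by fun_prop) (by fun_prop))
      (fun ω h => by
        have hv := hval1 ω h
        have := hY3 ω h
        simp only [Set.mem_ofPred_eq]
        clear * - this hv
        grind)
  have k00 : ∀ y : ℝ, P.real ({ω | Z ω = 0} ∩ {ω | Y ω ≤ y ∧ D ω = 0})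
      = P.real {ω | Y00 ω ≤ y ∧ D0 ω = 0} * P.real {ω | Z ω = 0} := fun y =>
    ind {q | q.2.2.2.1 ≤ y ∧ q.2.2.2.2.1 = 0} 0 _
      (meas_aux (by fun_prop) (by fun_prop))
      (fun ω h => by
        have hv := hval0 ω h
        have := hY4 ω h
        simp only [Set.mem_ofPred_eq]
        clear * - this hv
        grind)
  change pa = P.real _ at hpa
  change pn = P.real _ at hpn
  change pc = P.real _ at hpc
  change pdf = P.real _ at hpdf
  have mon' : ∀ᵐ ω ∂P, ¬ (D0 ω = 1 ∧ D1 ω = 0) := by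
    filter_upwards [MON] with ω h h'
    rw [h'.1, h'.2] at h
    norm_num at h
  have hdf : pdf = 0 := by
    rw [hpdf, ← measureReal_empty (μ := P)]
    apply eqae_aux
    filter_upwards [mon'] with ω h
    simpa [typeDF] using h
  have sD1 : P.real {ω | D1 ω = 1} = pa + pc := by
    rw [hpa, hpc]
    refine split_aux_s12 P hCm (Filter.Eventually.of_forall fun ω => ?_) fun ω => ?_ <;>
    · simp only [typeA, typeC, Set.mem_ofPred_eq]
      have := hD0b ω
      clear * - this
      grind
  have sD0 : P.real {ω | D0 ω = 1} = pa := by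
    rw [hpa]
    refine eqae_aux P ?_
    filter_upwards [mon'] with ω h
    simp only [typeA, Set.mem_ofPred_eq]
    have := hD1b ω
    clear * - this h
    grind
  have sN : P.real {ω | D1 ω = 0} = pn := by
    rw [hpn]
    refine eqae_aux P ?_
    filter_upwards [mon'] with ω h
    simp only [typeN, Set.mem_ofPred_eq]
    have := hD0b ω
    clear * - this h
    grind
  have e1 : pr P {ω | Z ω = 1} {ω | D ω = 1} = pa + pc := by
    rw [pr_eq_aux_s12 P (hZs 1), j1, mul_div_cancel_right₀ _ hz1.ne', sD1]
  have e0 : pr P {ω | Z ω = 0} {ω | D ω = 1} = pa := by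
    rw [pr_eq_aux_s12 P (hZs 0), j0, mul_div_cancel_right₀ _ hz0.ne', sD0]
  have en : pr P {ω | Z ω = 1} {ω | D ω = 0} = pn := by
    rw [pr_eq_aux_s12 P (hZs 1), j1, mul_div_cancel_right₀ _ hz1.ne', sN]
  have hcpos : 0 < pc := by rw [e1, e0] at hfs; linarith
  refine ⟨hdf, by rw [e1, e0]; ring, hcpos, e0.symm, en.symm, fun hap y => ?_, fun hnp y => ?_⟩
  · have hq : P.real {ω | Y11 ω ≤ y ∧ D1 ω = 1}
        = P.real (typeA D0 D1 ∩ {ω | Y11 ω ≤ y}) + P.real (typeC D0 D1 ∩ {ω | Y11 ω ≤ y}) := by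
      refine split_aux_s12 P (hCm.inter (measurableSet_le hY11m measurable_const))
        (Filter.Eventually.of_forall fun ω => ?_) fun ω => ?_ <;>
      · simp only [typeA, typeC, Set.mem_ofPred_eq, Set.mem_inter_iff]
        have := hD0b ω
        clear * - this
        grind
    have hb := bounds_aux_s12 (c := pc) hap hq measureReal_nonneg
      ((measureReal_mono Set.inter_subset_left).trans_eq hpa.symm) measureReal_nonneg
      ((measureReal_mono Set.inter_subset_left).trans_eq hpc.symm)
    rw [pr_eq_aux_s12 P (hZs 1), k11, mul_div_cancel_right₀ _ hz1.ne', pr_eq_aux_s12 P hAm,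
      pr_eq_aux_s12 P hAm, pr_eq_aux_s12 P hCm, ← hpa, ← hpc]
    refine ⟨hb.1, hb.2.1, ?_, hb.2.2⟩
    have hm : MeasurableSet {ω | D ω = 1 ∧ Z ω = 0} := (hDs 1).inter (hZs 0)
    rw [pr_eq_aux_s12 P hm,
      show {ω | D ω = 1 ∧ Z ω = 0} ∩ {ω | Y ω ≤ y}
        = {ω | Z ω = 0} ∩ {ω | Y ω ≤ y ∧ D ω = 1} by ext ω; simp; tauto,
      show {ω | D ω = 1 ∧ Z ω = 0} = {ω | Z ω = 0} ∩ {ω | D ω = 1} by ext ω; simp; tauto,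
      k10, j0, sD0, mul_div_mul_right _ _ hz0.ne']
    congr 1
    refine eqae_aux P ?_
    filter_upwards [mon'] with ω h
    simp only [typeA, Set.mem_ofPred_eq, Set.mem_inter_iff]
    have := hD1b ω
    clear * - this h
    grind
  · have hq : P.real {ω | Y00 ω ≤ y ∧ D0 ω = 0}
        = P.real (typeN D0 D1 ∩ {ω | Y00 ω ≤ y}) + P.real (typeC D0 D1 ∩ {ω | Y00 ω ≤ y}) := by
      refine split_aux_s12 P (hCm.inter (measurableSet_le hY00m measurable_const))
        (Filter.Eventually.of_forall fun ω => ?_) fun ω => ?_ <;>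
      · simp only [typeN, typeC, Set.mem_ofPred_eq, Set.mem_inter_iff]
        have := hD1b ω
        clear * - this
        grind
    have hb := bounds_aux_s12 (c := pc) hnp hq measureReal_nonneg
      ((measureReal_mono Set.inter_subset_left).trans_eq hpn.symm) measureReal_nonneg
      ((measureReal_mono Set.inter_subset_left).trans_eq hpc.symm)
    rw [pr_eq_aux_s12 P (hZs 0), k00, mul_div_cancel_right₀ _ hz0.ne', pr_eq_aux_s12 P hNm,
      pr_eq_aux_s12 P hNm, pr_eq_aux_s12 P hCm, ← hpn, ← hpc]
    refine ⟨hb.1, hb.2.1, ?_, hb.2.2⟩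
    have hm : MeasurableSet {ω | D ω = 0 ∧ Z ω = 1} := (hDs 0).inter (hZs 1)
    rw [pr_eq_aux_s12 P hm,
      show {ω | D ω = 0 ∧ Z ω = 1} ∩ {ω | Y ω ≤ y}
        = {ω | Z ω = 1} ∩ {ω | Y ω ≤ y ∧ D ω = 0} by ext ω; simp; tauto,
      show {ω | D ω = 0 ∧ Z ω = 1} = {ω | Z ω = 1} ∩ {ω | D ω = 0} by ext ω; simp; tauto,
      k01, j1, sN, mul_div_mul_right _ _ hz1.ne']
    congr 1
    refine eqae_aux P ?_
    filter_upwards [mon'] with ω h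
    simp only [typeN, Set.mem_ofPred_eq, Set.mem_inter_iff]
    have := hD0b ω
    clear * - this h
    grind
end

section
/- Assume RA and MON (D₁ ≥ D₀ almost surely), with Y₁₁, Y₁₀, Y₀₁, Y₀₀ integrable. Then the intent-to-treat effect decomposes as: E[Y | Z=1] − E[Y | Z=0] = E[(Y₁₁ − Y₁₀)·1{T=a}] + E[(Y₀₁ − Y₀₀)·1{T=n}] + E[(Y₁₁ − Y₀₀)·1{T=c}]. Consequently, if p_a > 0, p_n > 0 and p_c > 0, then E[Y | Z=1] − E[Y | Z=0] = p_a·E[Y₁₁ − Y₁₀ | T=a] + p_n·E[Y₀₁ − Y₀₀ | T=n] + p_c·E[Y₁₁ − Y₀₀ | T=c], where p_a + p_n + p_c = 1, i.e. the intent-to-treat effect is a convex combination of these three effects. -/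
open MeasureTheory ProbabilityTheory

theorem ce_eq_aux {Ω : Type*} [MeasurableSpace Ω] (P : Measure Ω) [IsProbabilityMeasure P]
    (Z Y W : Ω → ℝ) (z : ℝ) (hZm : Measurable Z) (hz : P {ω | Z ω = z} ≠ 0)
    (hWm : Measurable W) (hW : IndepFun W Z P) (hYW : ∀ ω, Z ω = z → Y ω = W ω) :
    ce P {ω | Z ω = z} Y = ∫ ω, W ω ∂P := by
  have hs : MeasurableSet {ω | Z ω = z} := hZm (measurableSet_singleton z)
  have hind : IndepFun W (fun ω => ({z} : Set ℝ).indicator (fun _ => (1 : ℝ)) (Z ω)) P :=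
    hW.comp (φ := id) (ψ := ({z} : Set ℝ).indicator (fun _ => (1 : ℝ))) measurable_id
      (measurable_const.indicator (measurableSet_singleton z))
  have hm : Measurable (fun ω => ({z} : Set ℝ).indicator (fun _ => (1 : ℝ)) (Z ω)) :=
    (measurable_const.indicator (measurableSet_singleton z)).comp hZm
  have key := hind.integral_fun_mul_eq_mul_integral hWm.aestronglyMeasurable
    hm.aestronglyMeasurable
  have e1 : ∫ ω, W ω * ({z} : Set ℝ).indicator (fun _ => (1 : ℝ)) (Z ω) ∂P
      = ∫ ω in {ω | Z ω = z}, Y ω ∂P := by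
    rw [← integral_indicator hs]
    congr 1
    ext ω
    by_cases h : Z ω = z
    · simp [Set.indicator, h, hYW ω h]
    · simp [Set.indicator, h]
  have e2 : ∫ ω, ({z} : Set ℝ).indicator (fun _ => (1 : ℝ)) (Z ω) ∂P
      = (P {ω | Z ω = z}).toReal := by
    have : (fun ω => ({z} : Set ℝ).indicator (fun _ => (1 : ℝ)) (Z ω))
        = {ω | Z ω = z}.indicator (fun _ => (1 : ℝ)) := by
      ext ω
      simp [Set.indicator]
    rw [this, integral_indicator hs]
    simp [Measure.real]
  rw [e1, e2] at key
  have hne : (P {ω | Z ω = z}).toReal ≠ 0 :=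
    ENNReal.toReal_ne_zero.2 ⟨hz, measure_ne_top _ _⟩
  rw [ce, ProbabilityTheory.cond, integral_smul_measure, key, ENNReal.toReal_inv, smul_eq_mul]
  field_simp

theorem mul_ce_aux {Ω : Type*} [MeasurableSpace Ω] (P : Measure Ω) [IsProbabilityMeasure P]
    (s : Set Ω) (f : Ω → ℝ) (h : 0 < (P s).toReal) :
    (P s).toReal * ce P s f = ∫ ω in s, f ω ∂P := by
  rw [ce, ProbabilityTheory.cond, integral_smul_measure, ENNReal.toReal_inv, smul_eq_mul]
  field_simp

theorem integrable_mix_aux {Ω : Type*} [MeasurableSpace Ω] (P : Measure Ω)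
    (A B D : Ω → ℝ) (hA : Integrable A P) (hB : Integrable B P) (hD : Measurable D)
    (hDb : ∀ ω, D ω = 0 ∨ D ω = 1) :
    Integrable (fun ω => A ω * D ω + B ω * (1 - D ω)) P := by
  refine (hA.mul_bdd (c := 1) hD.aestronglyMeasurable ?_).add
    (hB.mul_bdd (c := 1) (measurable_const.sub hD).aestronglyMeasurable ?_)
  · filter_upwards with ω
    rcases hDb ω with h | h <;> simp [h]
  · filter_upwards with ω
    rcases hDb ω with h | h <;> simp [h]

theorem itt_decomposition
    {Ω : Type*} [MeasurableSpace Ω] (P : Measure Ω) [IsProbabilityMeasure P]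
    (Y11 Y10 Y01 Y00 D0 D1 Z D Y : Ω → ℝ)
    (hY11m : Measurable Y11) (hY10m : Measurable Y10)
    (hY01m : Measurable Y01) (hY00m : Measurable Y00)
    (hD0m : Measurable D0) (hD1m : Measurable D1) (hZm : Measurable Z)
    (hD0b : ∀ ω, D0 ω = 0 ∨ D0 ω = 1) (hD1b : ∀ ω, D1 ω = 0 ∨ D1 ω = 1)
    (hZb : ∀ ω, Z ω = 0 ∨ Z ω = 1)
    (hZpos : 0 < P {ω | Z ω = 1}) (hZlt : P {ω | Z ω = 1} < 1)
    (hDdef : ∀ ω, D ω = D1 ω * Z ω + D0 ω * (1 - Z ω))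
    (hYdef : ∀ ω, Y ω = (Y11 ω * Z ω + Y10 ω * (1 - Z ω)) * D ω
        + (Y01 ω * Z ω + Y00 ω * (1 - Z ω)) * (1 - D ω))
    (RA : IndepFun (fun ω => (Y11 ω, Y10 ω, Y01 ω, Y00 ω, D0 ω, D1 ω)) Z P)
    (MON : ∀ᵐ ω ∂P, D0 ω ≤ D1 ω)
    (hY11int : Integrable Y11 P) (hY10int : Integrable Y10 P)
    (hY01int : Integrable Y01 P) (hY00int : Integrable Y00 P) :
    ce P {ω | Z ω = 1} Y - ce P {ω | Z ω = 0} Y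
      = (∫ ω in typeA D0 D1, (Y11 ω - Y10 ω) ∂P)
        + (∫ ω in typeN D0 D1, (Y01 ω - Y00 ω) ∂P)
        + (∫ ω in typeC D0 D1, (Y11 ω - Y00 ω) ∂P)
  ∧ (0 < (P (typeA D0 D1)).toReal → 0 < (P (typeN D0 D1)).toReal →
      0 < (P (typeC D0 D1)).toReal →
      ce P {ω | Z ω = 1} Y - ce P {ω | Z ω = 0} Y
        = (P (typeA D0 D1)).toReal * ce P (typeA D0 D1) (fun ω => Y11 ω - Y10 ω)
          + (P (typeN D0 D1)).toReal * ce P (typeN D0 D1) (fun ω => Y01 ω - Y00 ω)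
          + (P (typeC D0 D1)).toReal * ce P (typeC D0 D1) (fun ω => Y11 ω - Y00 ω)
      ∧ (P (typeA D0 D1)).toReal + (P (typeN D0 D1)).toReal
          + (P (typeC D0 D1)).toReal = 1) := by
  have hsA : MeasurableSet (typeA D0 D1) :=
    (hD0m (measurableSet_singleton 1)).inter (hD1m (measurableSet_singleton 1))
  have hsN : MeasurableSet (typeN D0 D1) :=
    (hD0m (measurableSet_singleton 0)).inter (hD1m (measurableSet_singleton 0))
  have hsC : MeasurableSet (typeC D0 D1) :=
    (hD0m (measurableSet_singleton 0)).inter (hD1m (measurableSet_singleton 1))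
  have hZ0 : P {ω | Z ω = 0} ≠ 0 := by
    intro h0
    apply hZlt.ne
    refine (prob_compl_eq_zero_iff (hZm (measurableSet_singleton 1))).1 ?_
    rw [← h0]
    congr 1
    ext ω
    rcases hZb ω with h | h <;> simp [h]
  have c1 : ce P {ω | Z ω = 1} Y = ∫ ω, (Y11 ω * D1 ω + Y01 ω * (1 - D1 ω)) ∂P := by
    apply ce_eq_aux P Z Y _ 1 hZm hZpos.ne' (by fun_prop)
    · exact RA.comp (φ := fun v : ℝ × ℝ × ℝ × ℝ × ℝ × ℝ =>
        v.1 * v.2.2.2.2.2 + v.2.2.1 * (1 - v.2.2.2.2.2)) (ψ := id) (by fun_prop) measurable_id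
    · intro ω h
      rw [hYdef, hDdef, h]
      ring
  have c0 : ce P {ω | Z ω = 0} Y = ∫ ω, (Y10 ω * D0 ω + Y00 ω * (1 - D0 ω)) ∂P := by
    apply ce_eq_aux P Z Y _ 0 hZm hZ0 (by fun_prop)
    · exact RA.comp (φ := fun v : ℝ × ℝ × ℝ × ℝ × ℝ × ℝ =>
        v.2.1 * v.2.2.2.2.1 + v.2.2.2.1 * (1 - v.2.2.2.2.1)) (ψ := id) (by fun_prop) measurable_id
    · intro ω h
      rw [hYdef, hDdef, h]
      ring
  have main : ce P {ω | Z ω = 1} Y - ce P {ω | Z ω = 0} Y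
      = (∫ ω in typeA D0 D1, (Y11 ω - Y10 ω) ∂P)
        + (∫ ω in typeN D0 D1, (Y01 ω - Y00 ω) ∂P)
        + (∫ ω in typeC D0 D1, (Y11 ω - Y00 ω) ∂P) := by
    have iA : Integrable ((typeA D0 D1).indicator (fun ω => Y11 ω - Y10 ω)) P :=
      (hY11int.sub hY10int).indicator hsA
    have iN : Integrable ((typeN D0 D1).indicator (fun ω => Y01 ω - Y00 ω)) P :=
      (hY01int.sub hY00int).indicator hsN
    have iC : Integrable ((typeC D0 D1).indicator (fun ω => Y11 ω - Y00 ω)) P :=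
      (hY11int.sub hY00int).indicator hsC
    rw [c1, c0, ← integral_sub (integrable_mix_aux P _ _ _ hY11int hY01int hD1m hD1b)
      (integrable_mix_aux P _ _ _ hY10int hY00int hD0m hD0b),
      ← integral_indicator hsA, ← integral_indicator hsN, ← integral_indicator hsC,
      ← integral_add iA iN, ← integral_add (by exact iA.add iN) iC]
    apply integral_congr_ae
    filter_upwards [MON] with ω hω
    rcases hD0b ω with h | h <;> rcases hD1b ω with h' | h' <;>
      simp [Set.indicator, typeA, typeN, typeC, h, h'] at hω ⊢
    all_goals norm_num at hω
  refine ⟨main, fun hA hN hC => ⟨?_, ?_⟩⟩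
  · rw [mul_ce_aux P _ _ hA, mul_ce_aux P _ _ hN, mul_ce_aux P _ _ hC, main]
  · have dAN : Disjoint (typeA D0 D1) (typeN D0 D1) := by
      rw [Set.disjoint_left]
      rintro ω ⟨h1, h2⟩ ⟨h3, h4⟩
      linarith
    have dC : Disjoint (typeA D0 D1 ∪ typeN D0 D1) (typeC D0 D1) := by
      rw [Set.disjoint_left]
      rintro ω (⟨h1, h2⟩ | ⟨h1, h2⟩) ⟨h3, h4⟩ <;> linarith
    have hu : P (typeA D0 D1 ∪ typeN D0 D1 ∪ typeC D0 D1) = 1 := by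
      rw [← measure_univ (μ := P)]
      apply measure_congr
      filter_upwards [MON] with ω hω
      apply propext
      refine ⟨fun _ => trivial, fun _ => ?_⟩
      rcases hD0b ω with h | h <;> rcases hD1b ω with h' | h'
      · exact Or.inl (Or.inr ⟨h, h'⟩)
      · exact Or.inr ⟨h, h'⟩
      · rw [h, h'] at hω
        norm_num at hω
      · exact Or.inl (Or.inl ⟨h, h'⟩)
    rw [measure_union dC hsC, measure_union dAN hsN] at hu
    rw [← ENNReal.toReal_add (measure_ne_top _ _) (measure_ne_top _ _),
      ← ENNReal.toReal_add (by finiteness) (measure_ne_top _ _), hu, ENNReal.toReal_one]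
end

section
/- Assume RA and ER, and suppose the outcome is binary: Y₁ and Y₀ take values in {0,1} almost surely. (i) If p_a > 0, then max{ (P(Y=1, D=1 | Z=1) − p_c)/p_a, (P(Y=1, D=1 | Z=0) − p_df)/p_a, 0 } ≤ E[Y₁ | T=a] ≤ min{ P(Y=1, D=1 | Z=1)/p_a, P(Y=1, D=1 | Z=0)/p_a, 1 }. (ii) If p_n > 0, then max{ (P(Y=1, D=0 | Z=0) − p_c)/p_n, (P(Y=1, D=0 | Z=1) − p_df)/p_n, 0 } ≤ E[Y₀ | T=n] ≤ min{ P(Y=1, D=0 | Z=0)/p_n, P(Y=1, D=0 | Z=1)/p_n, 1 }. -/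
open MeasureTheory ProbabilityTheory

lemma aux_pr_s17 {Ω β : Type*} [MeasurableSpace Ω] [MeasurableSpace β] (P : Measure Ω)
    [IsProbabilityMeasure P] (X : Ω → β) (Z : Ω → ℝ) (hZ : Measurable Z)
    (h : IndepFun X Z P) (z : ℝ) (hz : P {ω | Z ω = z} ≠ 0) (E : Set Ω) (S : Set β)
    (hS : MeasurableSet S) (F : Set Ω) (hF : ∀ᵐ ω ∂P, X ω ∈ S ↔ ω ∈ F)
    (hE : ∀ᵐ ω ∂P, Z ω = z → (ω ∈ E ↔ ω ∈ F)) :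
    pr P {ω | Z ω = z} E = P.real F := by
  have hZs : MeasurableSet {ω | Z ω = z} := hZ (measurableSet_singleton z)
  have e1 : P ({ω | Z ω = z} ∩ E) = P (X ⁻¹' S ∩ Z ⁻¹' {z}) := by
    apply measure_congr
    filter_upwards [hF, hE] with ω h1 h2
    apply propext
    change (Z ω = z ∧ ω ∈ E) ↔ (X ω ∈ S ∧ Z ω = z)
    tauto
  have e2 : P (X ⁻¹' S) = P F := by
    apply measure_congr
    filter_upwards [hF] with ω h1
    exact propext h1
  have e3 := h.measure_inter_preimage_eq_mul S {z} hS (measurableSet_singleton z)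
  have e4 : Z ⁻¹' {z} = {ω | Z ω = z} := rfl
  rw [e4] at e1 e3
  unfold pr
  rw [cond_apply hZs, e1, e3, e2, mul_comm (P F), ← mul_assoc,
    ENNReal.inv_mul_cancel hz (measure_ne_top _ _), one_mul]
  rfl

lemma aux_ce_s17 {Ω : Type*} [MeasurableSpace Ω] (P : Measure Ω)
    [IsProbabilityMeasure P] (T : Set Ω) (hT : MeasurableSet T) (f : Ω → ℝ) (hf : Measurable f)
    (hb : ∀ᵐ ω ∂P, f ω = 0 ∨ f ω = 1) :
    ce P T f = P.real (T ∩ {ω | f ω = 1}) / P.real T := by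
  have hm : MeasurableSet {ω | f ω = 1} := hf (measurableSet_singleton 1)
  have h1 : f =ᵐ[P[|T]] Set.indicator {ω | f ω = 1} 1 := by
    have := (cond_absolutelyContinuous (μ := P) (s := T)).ae_le hb
    filter_upwards [this] with ω h
    rcases h with h | h <;> simp [h]
  unfold ce
  rw [integral_congr_ae h1, integral_indicator_one hm, measureReal_def, cond_apply hT,
    ENNReal.toReal_mul, ENNReal.toReal_inv, div_eq_inv_mul]
  rfl

lemma aux_core {Ω : Type*} [MeasurableSpace Ω] (P : Measure Ω)
    [IsProbabilityMeasure P] (T C1 C2 : Set Ω) (hT : MeasurableSet T) (f : Ω → ℝ)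
    (hf : Measurable f)
    (hb : ∀ᵐ ω ∂P, f ω = 0 ∨ f ω = 1) (Q1 Q2 : Set Ω)
    (h1 : T ∩ {ω | f ω = 1} ⊆ Q1) (h2 : Q1 ⊆ (T ∩ {ω | f ω = 1}) ∪ C1)
    (h3 : T ∩ {ω | f ω = 1} ⊆ Q2) (h4 : Q2 ⊆ (T ∩ {ω | f ω = 1}) ∪ C2)
    (pos : 0 < P.real T) :
    max (max ((P.real Q1 - P.real C1) / P.real T) ((P.real Q2 - P.real C2) / P.real T)) 0
        ≤ ce P T f
      ∧ ce P T f ≤ min (min (P.real Q1 / P.real T) (P.real Q2 / P.real T)) 1 := by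
  rw [aux_ce_s17 P T hT f hf hb]
  have a1 := measureReal_mono (μ := P) h1
  have a3 := measureReal_mono (μ := P) h3
  have a2 := (measureReal_mono (μ := P) h2).trans (measureReal_union_le _ _)
  have a4 := (measureReal_mono (μ := P) h4).trans (measureReal_union_le _ _)
  have a5 : P.real (T ∩ {ω | f ω = 1}) ≤ P.real T := measureReal_mono Set.inter_subset_left
  refine ⟨max_le (max_le ?_ ?_) (by positivity), le_min (le_min ?_ ?_) ?_⟩
  · gcongr; linarith
  · gcongr; linarith
  · gcongr
  · gcongr
  · exact (div_le_one pos).2 a5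

theorem binary_outcome_bounds
    {Ω : Type*} [MeasurableSpace Ω] (P : Measure Ω) [IsProbabilityMeasure P]
    (Y11 Y10 Y01 Y00 D0 D1 Z D Y : Ω → ℝ)
    (hY11m : Measurable Y11) (hY10m : Measurable Y10)
    (hY01m : Measurable Y01) (hY00m : Measurable Y00)
    (hD0m : Measurable D0) (hD1m : Measurable D1) (hZm : Measurable Z)
    (hD0b : ∀ ω, D0 ω = 0 ∨ D0 ω = 1) (hD1b : ∀ ω, D1 ω = 0 ∨ D1 ω = 1)
    (hZb : ∀ ω, Z ω = 0 ∨ Z ω = 1)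
    (hZpos : 0 < P {ω | Z ω = 1}) (hZlt : P {ω | Z ω = 1} < 1)
    (hDdef : ∀ ω, D ω = D1 ω * Z ω + D0 ω * (1 - Z ω))
    (hYdef : ∀ ω, Y ω = (Y11 ω * Z ω + Y10 ω * (1 - Z ω)) * D ω
        + (Y01 ω * Z ω + Y00 ω * (1 - Z ω)) * (1 - D ω))
    (RA : IndepFun (fun ω => (Y11 ω, Y10 ω, Y01 ω, Y00 ω, D0 ω, D1 ω)) Z P)
    (ER1 : ∀ᵐ ω ∂P, Y11 ω = Y10 ω) (ER0 : ∀ᵐ ω ∂P, Y01 ω = Y00 ω)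
    (hY1b : ∀ᵐ ω ∂P, Y11 ω = 0 ∨ Y11 ω = 1)
    (hY0b : ∀ᵐ ω ∂P, Y00 ω = 0 ∨ Y00 ω = 1)
    (pa pn pc pdf : ℝ)
    (hpa : pa = (P (typeA D0 D1)).toReal) (hpn : pn = (P (typeN D0 D1)).toReal)
    (hpc : pc = (P (typeC D0 D1)).toReal) (hpdf : pdf = (P (typeDF D0 D1)).toReal) :
    (0 < pa →
      max (max ((pr P {ω | Z ω = 1} {ω | Y ω = 1 ∧ D ω = 1} - pc) / pa)
              ((pr P {ω | Z ω = 0} {ω | Y ω = 1 ∧ D ω = 1} - pdf) / pa)) 0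
        ≤ ce P (typeA D0 D1) Y11
      ∧ ce P (typeA D0 D1) Y11
        ≤ min (min (pr P {ω | Z ω = 1} {ω | Y ω = 1 ∧ D ω = 1} / pa)
                  (pr P {ω | Z ω = 0} {ω | Y ω = 1 ∧ D ω = 1} / pa)) 1)
  ∧ (0 < pn →
      max (max ((pr P {ω | Z ω = 0} {ω | Y ω = 1 ∧ D ω = 0} - pc) / pn)
              ((pr P {ω | Z ω = 1} {ω | Y ω = 1 ∧ D ω = 0} - pdf) / pn)) 0
        ≤ ce P (typeN D0 D1) Y00
      ∧ ce P (typeN D0 D1) Y00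
        ≤ min (min (pr P {ω | Z ω = 0} {ω | Y ω = 1 ∧ D ω = 0} / pn)
                  (pr P {ω | Z ω = 1} {ω | Y ω = 1 ∧ D ω = 0} / pn)) 1) := by
  have hZ1 : P {ω | Z ω = 1} ≠ 0 := hZpos.ne'
  have hZ0 : P {ω | Z ω = 0} ≠ 0 := by
    intro h0
    apply hZlt.ne
    have hc : {ω | Z ω = 0} = {ω | Z ω = 1}ᶜ := by
      ext ω
      rcases hZb ω with h | h <;> simp [h]
    rw [hc] at h0
    exact (prob_compl_eq_zero_iff (hZm (measurableSet_singleton 1))).1 h0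
  have hTA : MeasurableSet (typeA D0 D1) :=
    (hD0m (measurableSet_singleton 1)).inter (hD1m (measurableSet_singleton 1))
  have hTN : MeasurableSet (typeN D0 D1) :=
    (hD0m (measurableSet_singleton 0)).inter (hD1m (measurableSet_singleton 0))
  have q1 : pr P {ω | Z ω = 1} {ω | Y ω = 1 ∧ D ω = 1} = P.real {ω | Y11 ω = 1 ∧ D1 ω = 1} := by
    refine aux_pr_s17 P _ Z hZm RA 1 hZ1 _ {x | x.1 = 1 ∧ x.2.2.2.2.2 = 1} ?_ _ ?_ ?_
    · exact (measurableSet_eq_fun (by fun_prop) (by fun_prop)).inter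
        (measurableSet_eq_fun (by fun_prop) (by fun_prop))
    · exact Filter.Eventually.of_forall fun ω => Iff.rfl
    · refine Filter.Eventually.of_forall fun ω hz => ?_
      have e1 := hDdef ω
      have e2 := hYdef ω
      simp only [Set.mem_ofPred_eq]
      rw [e2, e1, hz]
      rcases hD1b ω with h | h <;> simp [h]
  have q2 : pr P {ω | Z ω = 0} {ω | Y ω = 1 ∧ D ω = 1} = P.real {ω | Y11 ω = 1 ∧ D0 ω = 1} := by
    refine aux_pr_s17 P _ Z hZm RA 0 hZ0 _ {x | x.1 = 1 ∧ x.2.2.2.2.1 = 1} ?_ _ ?_ ?_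
    · exact (measurableSet_eq_fun (by fun_prop) (by fun_prop)).inter
        (measurableSet_eq_fun (by fun_prop) (by fun_prop))
    · exact Filter.Eventually.of_forall fun ω => Iff.rfl
    · filter_upwards [ER1] with ω her hz
      have e1 := hDdef ω
      have e2 := hYdef ω
      change (Y ω = 1 ∧ D ω = 1) ↔ (Y11 ω = 1 ∧ D0 ω = 1)
      rw [e2, e1, hz, her]
      rcases hD0b ω with h | h <;> simp [h]
  have q3 : pr P {ω | Z ω = 0} {ω | Y ω = 1 ∧ D ω = 0} = P.real {ω | Y00 ω = 1 ∧ D0 ω = 0} := by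
    refine aux_pr_s17 P _ Z hZm RA 0 hZ0 _ {x | x.2.2.2.1 = 1 ∧ x.2.2.2.2.1 = 0} ?_ _ ?_ ?_
    · exact (measurableSet_eq_fun (by fun_prop) (by fun_prop)).inter
        (measurableSet_eq_fun (by fun_prop) (by fun_prop))
    · exact Filter.Eventually.of_forall fun ω => Iff.rfl
    · refine Filter.Eventually.of_forall fun ω hz => ?_
      have e1 := hDdef ω
      have e2 := hYdef ω
      simp only [Set.mem_ofPred_eq]
      rw [e2, e1, hz]
      rcases hD0b ω with h | h <;> simp [h]
  have q4 : pr P {ω | Z ω = 1} {ω | Y ω = 1 ∧ D ω = 0} = P.real {ω | Y00 ω = 1 ∧ D1 ω = 0} := by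
    refine aux_pr_s17 P _ Z hZm RA 1 hZ1 _ {x | x.2.2.2.1 = 1 ∧ x.2.2.2.2.2 = 0} ?_ _ ?_ ?_
    · exact (measurableSet_eq_fun (by fun_prop) (by fun_prop)).inter
        (measurableSet_eq_fun (by fun_prop) (by fun_prop))
    · exact Filter.Eventually.of_forall fun ω => Iff.rfl
    · filter_upwards [ER0] with ω her hz
      have e1 := hDdef ω
      have e2 := hYdef ω
      change (Y ω = 1 ∧ D ω = 0) ↔ (Y00 ω = 1 ∧ D1 ω = 0)
      rw [e2, e1, hz, her]
      rcases hD1b ω with h | h <;> simp [h]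
  rw [q1, q2, q3, q4]
  subst hpa hpn hpc hpdf
  constructor
  · refine aux_core P _ (typeC D0 D1) (typeDF D0 D1) hTA Y11 hY11m hY1b _ _ ?_ ?_ ?_ ?_
    all_goals
      intro ω
      have := hD0b ω
      have := hD1b ω
      simp only [typeA, typeC, typeDF, Set.mem_inter_iff, Set.mem_union, Set.mem_ofPred_eq]
      tauto
  · refine aux_core P _ (typeC D0 D1) (typeDF D0 D1) hTN Y00 hY00m hY0b _ _ ?_ ?_ ?_ ?_
    all_goals
      intro ω
      have := hD0b ω
      have := hD1b ω
      simp only [typeN, typeC, typeDF, Set.mem_inter_iff, Set.mem_union, Set.mem_ofPred_eq]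
      tauto
end
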